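/- Let ρ : Fin r → Equiv.Perm (Fin n) be a string C-group in the blocks-of-size-2 setup with m = n/2 ≥ 7. If r ≥ n/2, then the set R ∪ C has at most 2 elements and the set L has at least n/2 − 2 elements. -/

import Mathlib

/-- A string group generated by involutions (sggi): each generator has order 2 and
nonconsecutive generators commute. -/
def IsSggi {n r : ℕ} (ρ : Fin r → Equiv.Perm (Fin n)) : Prop :=
  (∀ i, orderOf (ρ i) = 2) ∧
  ∀ i j : Fin r, 1 < |((i : ℕ) : ℤ) - ((j : ℕ) : ℤ)| → (ρ i * ρ j) ^ 2 = 1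

/-- A string C-group: an sggi satisfying the intersection property. -/
def IsStringC {n r : ℕ} (ρ : Fin r → Equiv.Perm (Fin n)) : Prop :=
  IsSggi ρ ∧ ∀ J K : Set (Fin r),
    Subgroup.closure (ρ '' J) ⊓ Subgroup.closure (ρ '' K) =
      Subgroup.closure (ρ '' (J ∩ K))

/-!
Let `z` be the permutation swapping the two points of every block. The action on the blocks is
primitive, so an involution of the blocks commuting with it is trivial, and a nontrivial involution
commuting with all `ρ l`, `l ∈ L`, is `z`. As the generators are independent, at most one of those
outside `L` is of this kind; every other one is next to an element of `L`, by the string condition.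

If `L` has a gap, its two halves induce commuting nontrivial factors of a primitive group. Each of
them is then regular on the `m` blocks, so each half has at most `log₂ m` elements and is an
interval; so at least two indices would be neither in `L` nor next to it, which is impossible.

If `L` is an interval, it has at most two neighbours, so a third index outside `L` forces some
generator to be `z` and `|L| ≥ m - 3`. The even or the odd indices in `L` then induce an elementary
abelian group `E` on the blocks with `8 * |E| ^ 2 ≥ 2 ^ m`, and there are two further indices `i`
outside `L`. For each of them, the sets of blocks swapped pointwise by elements of the group
generated by `ρ j`, `j ∈ L ∪ {i}`, form a binary code which is invariant under the primitive group
and, by independence from `z`, does not contain the all-one word. The two codes are comparable,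
which contradicts the independence of the two generators. For so large an `E` has either an orbit
missing at most one block, and a fixed codeword of `E` then yields all words of even weight; or an
involution moving at most four blocks, whose support is a codeword of weight four in both codes. In
that case the words orthogonal to both codes in their intersection form a self-orthogonal code whose
words of weight four are the complements of the lines of a Fano plane. There are thus seven blocks,
and every word orthogonal to this code lies in it or is the complement of a word in it.
-/

open Equiv MulAction
open scoped Pointwise symmDiff Matrix

section Numerics

theorem sq_two_pow_le_two_pow_two_pow (k : ℕ) : (2 ^ k) ^ 2 ≤ 2 ^ (2 ^ k) := by
  rw [← pow_mul]
  refine Nat.pow_le_pow_right two_pos ?_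
  rcases k with _ | k
  · norm_num
  · have := Nat.lt_two_pow_self (n := k)
    omega

theorem four_mul_sq_le_two_pow {n : ℕ} (hn : 8 ≤ n) : 4 * n ^ 2 ≤ 2 ^ n := by
  induction n, hn using Nat.le_induction with
  | base => norm_num
  | succ n hn ih =>
    rw [pow_succ 2 n]
    nlinarith

theorem two_mul_add_five_lt_two_pow {n : ℕ} (hn : 4 ≤ n) : 2 * n + 5 < 2 ^ n := by
  induction n, hn using Nat.le_induction with
  | base => norm_num
  | succ n hn ih =>
    rw [pow_succ 2 n]
    omega

theorem add_add_five_lt_of_two_pow_le {m s t : ℕ} (hm : 12 ≤ m) (hs : 2 ^ s ≤ m)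
    (ht : 2 ^ t ≤ m) : s + t + 5 < m := by
  wlog hst : s ≤ t generalizing s t
  · have := this ht hs (by omega)
    omega
  by_cases h4 : 4 ≤ t
  · have := two_mul_add_five_lt_two_pow h4
    omega
  · omega

end Numerics

section ElementaryAbelian

variable {G E α : Type*} [Group G] [MulAction G α] [CommGroup E] [MulAction E α]

theorem isFixedBlock_union {Y Z : Set α} (hY : IsFixedBlock G Y) (hZ : IsFixedBlock G Z) :
    IsFixedBlock G (Y ∪ Z) := fun g => by
  rw [Set.smul_set_union, hY g, hZ g]

theorem isFixedBlock_sdiff {Y Z : Set α} (hY : IsFixedBlock G Y) (hZ : IsFixedBlock G Z) :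
    IsFixedBlock G (Y \ Z) := fun g => by
  rw [Set.smul_set_sdiff, hY g, hZ g]

theorem orbit_subset_of_isFixedBlock {Y : Set α} (hY : IsFixedBlock G Y) {x : α} (hx : x ∈ Y) :
    orbit G x ⊆ Y := by
  rintro _ ⟨g, rfl⟩
  rw [← hY g]
  exact Set.smul_mem_smul_set hx

theorem fixingSubgroup_univ [FaithfulSMul G α] : fixingSubgroup G (Set.univ : Set α) = ⊥ := by
  refine (Subgroup.eq_bot_iff_forall _).2 fun g hg => eq_of_smul_eq_smul fun x : α => ?_
  rw [one_smul, (mem_fixingSubgroup_iff G).1 hg x (Set.mem_univ x)]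

theorem fixingSubgroup_orbit (x : α) : fixingSubgroup E (orbit E x) = stabilizer E x := by
  refine le_antisymm (fun g hg => (mem_fixingSubgroup_iff E).1 hg x (mem_orbit_self x)) ?_
  intro g hg
  rw [mem_fixingSubgroup_iff]
  rintro _ ⟨h, rfl⟩
  rw [smul_smul, mul_comm, mul_smul, mem_stabilizer_iff.1 hg]

theorem card_fixingSubgroup_le [Finite E] (Z : Set α) (x : α) :
    Nat.card (fixingSubgroup E Z) ≤
      (orbit E x).ncard * Nat.card (fixingSubgroup E (Z ∪ orbit E x)) := by
  have hindex : (stabilizer E x).relIndex (fixingSubgroup E Z) ≤ (stabilizer E x).index :=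
    Nat.le_of_dvd (Nat.pos_of_ne_zero Subgroup.index_ne_zero_of_finite)
      (Subgroup.relIndex_dvd_index_of_normal _ _)
  rw [fixingSubgroup_union, fixingSubgroup_orbit, ← index_stabilizer, mul_comm,
    ← Subgroup.relIndex_bot_left (fixingSubgroup E Z),
    ← Subgroup.relIndex_mul_relIndex ⊥ _ _ bot_le inf_le_left, Subgroup.relIndex_bot_left,
    Subgroup.inf_relIndex_left]
  exact Nat.mul_le_mul_left _ hindex

section

variable [Finite α]

theorem ncard_orbit_pos (x : α) : 0 < (orbit G x).ncard :=
  (Set.ncard_pos (Set.toFinite _)).2 ⟨x, mem_orbit_self x⟩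

theorem exists_isFixedBlock_ncard_eq_two {Y : Set α} (hY : IsFixedBlock G Y)
    (horb : ∀ x ∈ Y, (orbit G x).ncard ≤ 2) (htwo : 2 ≤ Y.ncard) :
    ∃ T ⊆ Y, IsFixedBlock G T ∧ T.ncard = 2 := by
  by_cases hex : ∃ x ∈ Y, (orbit G x).ncard = 2
  · obtain ⟨x, hx, hx2⟩ := hex
    exact ⟨_, orbit_subset_of_isFixedBlock hY hx, .orbit x, hx2⟩
  push Not at hex
  have horb_eq : ∀ x ∈ Y, {x} = orbit G x := fun x hx =>
    Set.eq_of_subset_of_ncard_le (Set.singleton_subset_iff.2 (mem_orbit_self x)) <| by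
      have := hex x hx
      have := horb x hx
      rw [Set.ncard_singleton]
      omega
  obtain ⟨x, y, hx, hy, hxy⟩ := (Set.one_lt_ncard_iff (Set.toFinite _)).1 htwo
  refine ⟨{x} ∪ {y}, by simp [Set.insert_subset_iff, hx, hy], ?_, Set.ncard_pair hxy⟩
  rw [horb_eq x hx, horb_eq y hy]
  exact isFixedBlock_union (.orbit x) (.orbit y)

theorem sq_card_fixingSubgroup_le [Finite E] (hE : IsPGroup 2 E) {Y : Set α}
    (hY : IsFixedBlock E Y) (Z : Set α) :
    Nat.card (fixingSubgroup E Z) ^ 2 ≤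
      2 ^ Y.ncard * Nat.card (fixingSubgroup E (Z ∪ Y)) ^ 2 := by
  induction hk : Y.ncard using Nat.strong_induction_on generalizing Y Z with
  | _ k ih =>
  subst hk
  rcases Y.eq_empty_or_nonempty with rfl | ⟨x, hx⟩
  · simp
  set O := orbit E x
  have hO : O ⊆ Y := orbit_subset_of_isFixedBlock hY hx
  have hncard : O.ncard + (Y \ O).ncard = Y.ncard := by
    rw [add_comm, Set.ncard_sdiff_add_ncard_of_subset hO]
  have hOpos : 0 < O.ncard := ncard_orbit_pos x
  have hsq : O.ncard ^ 2 ≤ 2 ^ O.ncard := by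
    obtain ⟨j, hj⟩ := hE.card_orbit x
    rw [← Nat.card_coe_set_eq, hj]
    exact sq_two_pow_le_two_pow_two_pow j
  have hrest := ih (Y \ O).ncard (by omega) (isFixedBlock_sdiff hY (.orbit x)) (Z ∪ O) rfl
  rw [Set.union_assoc, Set.union_sdiff_cancel hO] at hrest
  calc Nat.card (fixingSubgroup E Z) ^ 2
      ≤ O.ncard ^ 2 * Nat.card (fixingSubgroup E (Z ∪ O)) ^ 2 := by
        rw [← mul_pow]
        exact Nat.pow_le_pow_left (card_fixingSubgroup_le Z x) 2
    _ ≤ 2 ^ O.ncard * (2 ^ (Y \ O).ncard * Nat.card (fixingSubgroup E (Z ∪ Y)) ^ 2) :=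
        Nat.mul_le_mul hsq hrest
    _ = 2 ^ Y.ncard * Nat.card (fixingSubgroup E (Z ∪ Y)) ^ 2 := by
        rw [← mul_assoc, ← pow_add, hncard]

theorem sq_card_fixingSubgroup_le_two_pow_ncard_compl [Finite E] [FaithfulSMul E α]
    (hE : IsPGroup 2 E) {Z : Set α} (hZ : IsFixedBlock E Z) :
    Nat.card (fixingSubgroup E Z) ^ 2 ≤ 2 ^ Zᶜ.ncard := by
  have hcompl : IsFixedBlock E Zᶜ := fun g => by rw [Set.smul_set_compl, hZ g]
  simpa [fixingSubgroup_univ] using sq_card_fixingSubgroup_le hE hcompl Z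

theorem fixingSubgroup_compl_eq_bot
    (hmoved : ∀ g : E, g ≠ 1 → 4 < (fixedBy α g)ᶜ.ncard)
    {Y : Set α} (hY : Y.ncard ≤ 4) : fixingSubgroup E Yᶜ = ⊥ := by
  refine (Subgroup.eq_bot_iff_forall _).2 fun g hg => by_contra fun hne => ?_
  refine (hmoved g hne).not_ge ((Set.ncard_le_ncard ?_).trans hY)
  exact Set.compl_subset_comm.1 ((mem_fixingSubgroup_iff_subset_fixedBy E).1 hg)

theorem ncard_ne_four_of_isFixedBlock [Finite E] (hE : IsPGroup 2 E)
    (hcard : 2 ^ Nat.card α ≤ 8 * Nat.card E ^ 2)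
    (hmoved : ∀ g : E, g ≠ 1 → 4 < (fixedBy α g)ᶜ.ncard)
    {Y : Set α} (hY : IsFixedBlock E Y) : Y.ncard ≠ 4 := by
  intro h4
  have hcompl : IsFixedBlock E Yᶜ := fun g => by rw [Set.smul_set_compl, hY g]
  have hle := sq_card_fixingSubgroup_le hE hcompl ∅
  rw [Set.empty_union, fixingSubgroup_compl_eq_bot hmoved h4.le, fixingSubgroup_empty,
    Subgroup.card_top, Subgroup.card_bot] at hle
  rw [← Set.ncard_add_ncard_compl Y, h4, pow_add] at hcard
  have := Nat.two_pow_pos Yᶜ.ncard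
  omega

theorem ncard_orbit_le_two_of_le_four [Finite E] (hE : IsPGroup 2 E)
    (hcard : 2 ^ Nat.card α ≤ 8 * Nat.card E ^ 2)
    (hmoved : ∀ g : E, g ≠ 1 → 4 < (fixedBy α g)ᶜ.ncard)
    {x : α} (hx : (orbit E x).ncard ≤ 4) :
    (orbit E x).ncard ≤ 2 := by
  have hne := ncard_ne_four_of_isFixedBlock hE hcard hmoved (.orbit x)
  obtain ⟨k, hk⟩ := hE.card_orbit x
  rw [Nat.card_coe_set_eq] at hk
  rcases k with _ | _ | _ | k
  · omega
  · omega
  · omega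
  · have := Nat.one_le_two_pow (n := k)
    omega

theorem ncard_setOf_ncard_orbit_le_four [Finite E] (hE : IsPGroup 2 E)
    (hcard : 2 ^ Nat.card α ≤ 8 * Nat.card E ^ 2)
    (hmoved : ∀ g : E, g ≠ 1 → 4 < (fixedBy α g)ᶜ.ncard) :
    {x : α | (orbit E x).ncard ≤ 4}.ncard ≤ 3 := by
  set S := {x : α | (orbit E x).ncard ≤ 4}
  have hS : IsFixedBlock E S := IsInvariantBlock.isFixedBlock <| by
    rintro g _ ⟨x, hx, rfl⟩
    simpa [S] using hx
  have htwo : ∀ x ∈ S, (orbit E x).ncard ≤ 2 := fun x hx =>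
    ncard_orbit_le_two_of_le_four hE hcard hmoved hx
  by_contra! h4
  obtain ⟨T, hTS, hT, hT2⟩ := exists_isFixedBlock_ncard_eq_two hS htwo (by omega)
  have hrest := Set.ncard_sdiff_add_ncard_of_subset hTS
  obtain ⟨T', hT'S, hT', hT'2⟩ := exists_isFixedBlock_ncard_eq_two
    (isFixedBlock_sdiff hS hT) (fun x hx => htwo x hx.1) (by omega)
  have hdisj : Disjoint T T' := Set.disjoint_sdiff_right.mono_right hT'S
  have hunion : (T ∪ T').ncard = 4 := by rw [Set.ncard_union_eq hdisj, hT2, hT'2]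
  exact ncard_ne_four_of_isFixedBlock hE hcard hmoved (isFixedBlock_union hT hT') hunion

theorem four_mul_sq_ncard_orbit_le (hE : IsPGroup 2 E) {x : α} (hx : 4 < (orbit E x).ncard) :
    4 * (orbit E x).ncard ^ 2 ≤ 2 ^ (orbit E x).ncard := by
  apply four_mul_sq_le_two_pow
  obtain ⟨k, hk⟩ := hE.card_orbit x
  rw [Nat.card_coe_set_eq] at hk
  rw [hk] at hx ⊢
  exact Nat.pow_le_pow_right two_pos ((Nat.pow_lt_pow_iff_right (n := 2) one_lt_two).1 hx)

theorem mem_orbit_of_four_lt_ncard [Finite E] [FaithfulSMul E α] (hE : IsPGroup 2 E)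
    (hcard : 2 ^ Nat.card α ≤ 8 * Nat.card E ^ 2) {x y : α} (hx : 4 < (orbit E x).ncard)
    (hy : 4 < (orbit E y).ncard) : y ∈ orbit E x := by
  set O := orbit E x
  set Q := orbit E y
  by_contra hyO
  have hdisj : Disjoint O Q := (orbit.eq_or_disjoint x y).resolve_left fun h : O = Q =>
    hyO (h ▸ mem_orbit_self y)
  have hcardE : Nat.card E ≤ O.ncard * (Q.ncard * Nat.card (fixingSubgroup E (O ∪ Q))) := by
    have hO := card_fixingSubgroup_le (E := E) ∅ x
    rw [fixingSubgroup_empty, Subgroup.card_top, Set.empty_union] at hO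
    exact hO.trans (Nat.mul_le_mul_left _ (card_fixingSubgroup_le O y))
  have hfix := sq_card_fixingSubgroup_le_two_pow_ncard_compl hE
    (isFixedBlock_union (.orbit x : IsFixedBlock E O) (.orbit y : IsFixedBlock E Q))
  have hpow : 2 ^ Nat.card α = 2 ^ O.ncard * 2 ^ Q.ncard * 2 ^ (O ∪ Q)ᶜ.ncard := by
    rw [← Set.ncard_add_ncard_compl (O ∪ Q), Set.ncard_union_eq hdisj, pow_add, pow_add]
  have hlower : 16 * (O.ncard * Q.ncard) ^ 2 * 2 ^ (O ∪ Q)ᶜ.ncard ≤ 2 ^ Nat.card α := by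
    rw [hpow]
    refine Nat.mul_le_mul_right _ (Eq.trans_le ?_ (Nat.mul_le_mul
      (four_mul_sq_ncard_orbit_le hE hx) (four_mul_sq_ncard_orbit_le hE hy)))
    ring
  have hupper : 2 ^ Nat.card α ≤ 8 * (O.ncard * Q.ncard) ^ 2 * 2 ^ (O ∪ Q)ᶜ.ncard :=
    calc 2 ^ Nat.card α
        ≤ 8 * (O.ncard * (Q.ncard * Nat.card (fixingSubgroup E (O ∪ Q)))) ^ 2 :=
          hcard.trans (by gcongr)
      _ = 8 * (O.ncard * Q.ncard) ^ 2 * Nat.card (fixingSubgroup E (O ∪ Q)) ^ 2 := by ring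
      _ ≤ _ := Nat.mul_le_mul_left _ hfix
  have : 0 < (O.ncard * Q.ncard) ^ 2 * 2 ^ (O ∪ Q)ᶜ.ncard := by
    have := ncard_orbit_pos (G := E) x
    have := ncard_orbit_pos (G := E) y
    positivity
  nlinarith

theorem exists_moved_le_four_or_large_orbit [Finite E] [FaithfulSMul E α] (hE : IsPGroup 2 E)
    (hcard : 2 ^ Nat.card α ≤ 8 * Nat.card E ^ 2) (h3 : 3 < Nat.card α) :
    (∃ g : E, g ≠ 1 ∧ (fixedBy α g)ᶜ.ncard ≤ 4) ∨
      ∃ x : α, Nat.card α ≤ (orbit E x).ncard + 1 := by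
  by_contra! ⟨hmoved, hlarge⟩
  set S := {x : α | (orbit E x).ncard ≤ 4}
  have hS : S.ncard ≤ 3 := ncard_setOf_ncard_orbit_le_four hE hcard hmoved
  obtain ⟨x, hx⟩ : ∃ x, x ∉ S := by
    by_contra! hall
    rw [Set.eq_univ_of_forall hall, Set.ncard_univ] at hS
    omega
  set O := orbit E x
  have hO4 : 4 < O.ncard := not_le.1 hx
  have hOS : Oᶜ ⊆ S := fun y hy => by_contra fun hyS =>
    hy (mem_orbit_of_four_lt_ncard hE hcard hO4 (not_le.1 hyS))
  have hcompl : Oᶜ.ncard ≤ 4 := by linarith [Set.ncard_le_ncard hOS]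
  have hfix : fixingSubgroup E O = ⊥ := by
    simpa using fixingSubgroup_compl_eq_bot hmoved hcompl
  have hcardE : Nat.card E ≤ O.ncard := by
    simpa [fixingSubgroup_empty, hfix, O] using card_fixingSubgroup_le (E := E) ∅ x
  have hlt : 2 ^ Nat.card α ≤ 2 ^ (O.ncard + 1) :=
    calc 2 ^ Nat.card α ≤ 8 * O.ncard ^ 2 := hcard.trans (by gcongr)
      _ = 2 * (4 * O.ncard ^ 2) := by ring
      _ ≤ 2 * 2 ^ O.ncard := Nat.mul_le_mul_left _ (four_mul_sq_ncard_orbit_le hE hO4)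
      _ = 2 ^ (O.ncard + 1) := by ring
  exact (hlarge x).not_ge ((Nat.pow_le_pow_iff_right one_lt_two).1 hlt)

end

end ElementaryAbelian

section Primitive

variable {G X : Type*} [Group G] [MulAction G X]

theorem setoid_eq_bot_or_eq_top [IsPreprimitive G X] (s : Setoid X)
    (hs : ∀ (g : G) (x y : X), s x y → s (g • x) (g • y)) : s = ⊥ ∨ s = ⊤ := by
  have hblock : ∀ a, IsBlock G {x | s a x} := fun a => by
    refine isBlock_iff_smul_eq_of_mem.2 fun g y hy hgy => Set.ext fun z => ?_
    have hga : s a (g • a) := s.trans hgy (hs g y a (s.symm hy))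
    rw [Set.mem_smul_set_iff_inv_smul_mem]
    exact ⟨fun h => s.trans hga (by simpa using hs g _ _ h),
      fun h => by simpa using hs g⁻¹ _ _ (s.trans (s.symm hga) h)⟩
  refine or_iff_not_imp_left.2 fun hbot => ?_
  obtain ⟨a, c, hac, hne⟩ : ∃ a c, s a c ∧ a ≠ c := by
    by_contra! h
    exact hbot (le_bot_iff.1 fun x y hxy => h x y hxy)
  rcases (hblock a).subsingleton_or_eq_univ with h | h
  · exact absurd (h (s.refl a) hac) hne
  · have hall : ∀ x, s a x := Set.eq_univ_iff_forall.1 h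
    exact top_le_iff.1 fun x y _ => s.trans (s.symm (hall x)) (hall y)

end Primitive

/-- A linear code invariant under a permutation group of its coordinates. -/
def IsInvariantCode {R α : Type*} [Semiring R] (P : Subgroup (Perm α)) (W : Submodule R (α → R)) :
    Prop :=
  ∀ p ∈ P, ∀ w ∈ W, w ∘ p ∈ W

section Codes

variable {K α : Type*} [Field K] {P : Subgroup (Perm α)} {V W : Submodule K (α → K)}

theorem single_sub_single_mem {R : Type*} [Ring R] [DecidableEq α] [IsPreprimitive P α]
    {W : Submodule R (α → R)} (hW : IsInvariantCode P W) {a c : α} (hac : a ≠ c)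
    (h : Pi.single a 1 - Pi.single c 1 ∈ W) (x y : α) :
    (Pi.single x 1 - Pi.single y 1 : α → R) ∈ W := by
  let s : Setoid α :=
    { r := fun x y => Pi.single x 1 - Pi.single y 1 ∈ W
      iseqv :=
        { refl := fun x => by simp
          symm := fun {x y} h => by simpa using W.neg_mem h
          trans := fun {x y z} h h' => by simpa using W.add_mem h h' } }
  have hs : ∀ (p : P) (x y : α), s x y → s (p • x) (p • y) := fun p x y hxy => by
    have hsingle : ∀ z, (Pi.single z 1 : α → R) ∘ ⇑(p⁻¹ : Perm α) = Pi.single (p • z) 1 :=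
      fun z => by
        ext u
        simp [Pi.single_apply, Equiv.symm_apply_eq, Subgroup.smul_def]
    change Pi.single (p • x) 1 - Pi.single (p • y) 1 ∈ W
    rw [← hsingle, ← hsingle]
    exact hW _ (inv_mem p.2) _ hxy
  rcases setoid_eq_bot_or_eq_top s hs with hbot | htop
  · exact absurd (show s a c from h) (by rw [hbot]; exact hac)
  · change s x y
    rw [htop]
    trivial

theorem le_of_forall_single_sub_single_mem [Finite α] [DecidableEq α] (hWV : W ≤ V)
    (hV : V ≠ ⊤) (hW : ∀ x y : α, Pi.single x 1 - Pi.single y 1 ∈ W) : V ≤ W := by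
  have := Fintype.ofFinite α
  have hsub : ∀ (v : α → K) (a : α), v - (∑ i, v i) • Pi.single a 1 ∈ W := fun v a => by
    have hv : v - (∑ i, v i) • Pi.single a 1 =
        ∑ i, v i • (Pi.single i 1 - Pi.single a 1 : α → K) := by
      simp only [smul_sub, Finset.sum_sub_distrib, ← Finset.sum_smul]
      rw [← pi_eq_sum_univ' v]
    rw [hv]
    exact W.sum_mem fun i _ => W.smul_mem _ (hW i a)
  intro v hv
  by_contra hvW
  have hsum : ∑ i, v i ≠ 0 := fun h0 => by
    rcases isEmpty_or_nonempty α with hα | ⟨⟨a⟩⟩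
    · exact hvW (Subsingleton.elim 0 v ▸ W.zero_mem)
    · exact hvW (by simpa [h0] using hsub v a)
  have hsingle : ∀ a, Pi.single a 1 ∈ V := fun a =>
    (V.smul_mem_iff hsum).1 ((V.sub_mem_iff_right hv).1 (hWV (hsub v a)))
  refine hV (eq_top_iff.2 fun u _ => ?_)
  rw [pi_eq_sum_univ' u]
  exact V.sum_mem fun a _ => V.smul_mem _ (hsingle a)

theorem exists_codeword_apply_ne [IsPreprimitive P α] (hW : IsInvariantCode P W)
    (h1 : 1 ∉ W) (hne : W ≠ ⊥) {x y : α} (hxy : x ≠ y) : ∃ w ∈ W, w x ≠ w y := by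
  by_contra! hcon
  let s : Setoid α :=
    { r := fun x y => ∀ w ∈ W, w x = w y
      iseqv :=
        { refl := fun _ _ _ => rfl
          symm := fun h w hw => (h w hw).symm
          trans := fun h h' w hw => (h w hw).trans (h' w hw) } }
  rcases setoid_eq_bot_or_eq_top (G := P) s fun p x y h w hw => h _ (hW p p.2 w hw) with hs | hs
  · exact absurd (show s x y from hcon) (by rw [hs]; exact hxy)
  · obtain ⟨w, hw, hw0⟩ := W.exists_mem_ne_zero_of_ne_bot hne
    have hconst : ∀ z, w z = w x := fun z => (show s z x by rw [hs]; trivial) w hw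
    have hw1 : w = w x • 1 := by ext z; simpa using hconst z
    have hx : w x ≠ 0 := fun h0 => hw0 (by rw [hw1, h0, zero_smul])
    exact h1 ((W.smul_mem_iff hx).1 (hw1 ▸ hw))

end Codes

section CharVec

variable {α : Type*} [DecidableEq α]

/-- The characteristic vector of a finite set over the field with two elements. -/
def charVec (t : Finset α) : α → ZMod 2 := fun x => if x ∈ t then 1 else 0

theorem charVec_symmDiff (s t : Finset α) : charVec (s ∆ t) = charVec s + charVec t := by
  ext x
  by_cases hs : x ∈ s <;> by_cases ht : x ∈ t <;>
    simp [charVec, Finset.mem_symmDiff, hs, ht, CharTwo.add_self_eq_zero]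

theorem charVec_comp (t : Finset α) (p : Perm α) :
    charVec t ∘ p = charVec (t.map p.symm.toEmbedding) := by
  ext x
  simp [charVec]

theorem charVec_pair {x y : α} (hxy : x ≠ y) :
    charVec {x, y} = Pi.single x 1 - Pi.single y 1 := by
  ext z
  by_cases hx : z = x
  · subst hx
    simp [charVec, hxy]
  · by_cases hy : z = y
    · subst hy
      simp [charVec, hx, CharTwo.neg_eq]
    · simp [charVec, hx, hy]

theorem charVec_univ [Fintype α] : charVec (Finset.univ : Finset α) = 1 := by
  ext x
  simp [charVec]

theorem dotProduct_charVec [Fintype α] (w : α → ZMod 2) (t : Finset α) :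
    w ⬝ᵥ charVec t = ∑ i ∈ t, w i := by
  simp [dotProduct, charVec, Finset.sum_ite_mem]

theorem charVec_dotProduct_charVec [Fintype α] (s t : Finset α) :
    charVec s ⬝ᵥ charVec t = ((s ∩ t).card : ZMod 2) := by
  simp [dotProduct_charVec, charVec, Finset.sum_ite_mem, Finset.inter_comm]

end CharVec

section Fano

/-- Three of the seven complements of lines of the Fano plane; they span the even-weight part of the
Hamming code of length seven. -/
def fanoTetrad : Fin 3 → Finset (Fin 7) := ![{0, 1, 2, 3}, {0, 1, 4, 5}, {0, 2, 4, 6}]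

theorem card_fanoTetrad : ∀ k, (fanoTetrad k).card = 4 := by
  decide

theorem fanoTetrad_separates : ∀ i j, (∀ k, i ∈ fanoTetrad k ↔ j ∈ fanoTetrad k) → i = j := by
  decide

theorem exists_symmDiff_fanoTetrad_eq_univ : ∀ A : Finset (Fin 7), 0 ∈ A → A.card ≤ 3 →
    (∀ k, (A ∩ fanoTetrad k).card = 2) →
    A.card = 3 ∧ ∃ k l, A ∆ fanoTetrad k ∆ fanoTetrad l = Finset.univ := by
  decide +kernel

theorem exists_eq_sum_smul_charVec_fanoTetrad : ∀ w : Fin 7 → ZMod 2,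
    (∀ k, ∑ i ∈ fanoTetrad k, w i = 0) →
    ∃ (c : Fin 3 → ZMod 2) (e : ZMod 2), w = ∑ k, c k • charVec (fanoTetrad k) + e • 1 := by
  decide +kernel

variable {α : Type*} [DecidableEq α]

theorem exists_mem_notMem_notMem_of_card_inter {s t u : Finset α} {x : α} (hs : s.card = 4)
    (hst : (s ∩ t).card = 2) (hsu : (s ∩ u).card = 2) (hx : x ∈ s ∩ t ∩ u) :
    ∃ y ∈ s, y ∉ t ∧ y ∉ u := by
  by_contra! h
  have hsub : s ⊆ (s ∩ t) ∪ (s ∩ u) := fun y hy => by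
    by_cases hyt : y ∈ t
    · simp [hy, hyt]
    · simp [hy, h y hy hyt]
  have hpos : 0 < ((s ∩ t) ∩ (s ∩ u)).card := Finset.card_pos.2 ⟨x, by simp_all⟩
  have hle := Finset.card_le_card hsub
  have hadd := Finset.card_union_add_card_inter (s ∩ t) (s ∩ u)
  omega

theorem exists_fano_embedding {t : Fin 3 → Finset α} {x : α} (hcard : ∀ k, (t k).card = 4)
    (hinter : ∀ k l, k ≠ l → (t k ∩ t l).card = 2) (hx : t 0 ∩ t 1 ∩ t 2 = {x}) :
    ∃ f : Fin 7 ↪ α, ∀ k, (fanoTetrad k).map f = t k := by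
  have hmem : ∀ k, x ∈ t k := by
    have hx' : x ∈ t 0 ∩ t 1 ∩ t 2 := hx ▸ Finset.mem_singleton_self x
    simpa [Fin.forall_fin_succ, and_assoc] using hx'
  have hpair : ∀ k l m, k ≠ l → t k ∩ t l ∩ t m = {x} → ∃ y ∈ t k, y ∈ t l ∧ y ∉ t m := by
    intro k l m hkl hklm
    have hcard : 1 < (t k ∩ t l).card := by simp [hinter k l hkl]
    obtain ⟨y, hy, hyx⟩ := Finset.exists_mem_ne hcard x
    rw [Finset.mem_inter] at hy
    refine ⟨y, hy.1, hy.2, fun hym => hyx (Finset.mem_singleton.1 (hklm ▸ ?_))⟩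
    simp [hy, hym]
  have hpriv : ∀ k l m, k ≠ l → k ≠ m → ∃ y ∈ t k, y ∉ t l ∧ y ∉ t m := fun k l m hkl hkm =>
    exists_mem_notMem_notMem_of_card_inter (hcard k) (hinter k l hkl) (hinter k m hkm)
      (x := x) (by simp [hmem])
  have hvenn : ∀ i, ∃ y, ∀ k, y ∈ t k ↔ i ∈ fanoTetrad k := by
    obtain ⟨y₁, h₁⟩ := hpair 0 1 2 (by decide) hx
    obtain ⟨y₂, h₂⟩ := hpair 0 2 1 (by decide) (by rw [Finset.inter_right_comm, hx])
    obtain ⟨y₃, h₃⟩ := hpriv 0 1 2 (by decide) (by decide)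
    obtain ⟨y₄, h₄⟩ := hpair 1 2 0 (by decide)
      (by rw [Finset.inter_comm, ← Finset.inter_assoc, hx])
    obtain ⟨y₅, h₅⟩ := hpriv 1 0 2 (by decide) (by decide)
    obtain ⟨y₆, h₆⟩ := hpriv 2 0 1 (by decide) (by decide)
    refine fun i => ⟨![x, y₁, y₂, y₃, y₄, y₅, y₆] i, ?_⟩
    fin_cases i <;> simp [Fin.forall_fin_succ, fanoTetrad, *]
  choose f hf using hvenn
  have hinj : Function.Injective f := fun i j hij =>
    fanoTetrad_separates i j fun k => by rw [← hf, ← hf, hij]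
  refine ⟨⟨f, hinj⟩, fun k => Finset.eq_of_subset_of_card_le ?_ ?_⟩
  · exact Finset.map_subset_iff_subset_preimage.2 fun i hi => by simpa using (hf i k).2 hi
  · rw [Finset.card_map, hcard, card_fanoTetrad]

end Fano

section Tetrads

variable {α : Type*} [DecidableEq α] {P : Subgroup (Perm α)} {T : Submodule (ZMod 2) (α → ZMod 2)}
  {s t : Finset α}

/-- A tetrad of a binary code is the support of a codeword of weight four. -/
def IsTetrad (T : Submodule (ZMod 2) (α → ZMod 2)) (t : Finset α) : Prop :=
  t.card = 4 ∧ charVec t ∈ T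

theorem IsTetrad.map (ht : IsTetrad T t) (hT : IsInvariantCode P T) {p : Perm α} (hp : p ∈ P) :
    IsTetrad T (t.map p.toEmbedding) :=
  ⟨by rw [Finset.card_map, ht.1], charVec_comp t p⁻¹ ▸ hT p⁻¹ (inv_mem hp) _ ht.2⟩

variable [Fintype α]

theorem IsTetrad.card_inter_eq_two (hT : ∀ v ∈ T, ∀ w ∈ T, v ⬝ᵥ w = 0) (hs : IsTetrad T s)
    (ht : IsTetrad T t) {x : α} (hxs : x ∈ s) (hxt : x ∈ t) (hst : s ≠ t) :
    (s ∩ t).card = 2 := by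
  have heven := hT _ hs.2 _ ht.2
  rw [charVec_dotProduct_charVec, ZMod.natCast_eq_zero_iff_even] at heven
  have hpos : 0 < (s ∩ t).card := Finset.card_pos.2 ⟨x, Finset.mem_inter.2 ⟨hxs, hxt⟩⟩
  have hlt : (s ∩ t).card < 4 := by
    rw [← hs.1]
    refine Finset.card_lt_card ⟨Finset.inter_subset_left, fun h => hst ?_⟩
    exact Finset.eq_of_subset_of_card_le (h.trans Finset.inter_subset_right)
      (ht.1.trans hs.1.symm).le
  obtain ⟨k, hk⟩ := heven
  omega

theorem IsTetrad.symmDiff (hT : ∀ v ∈ T, ∀ w ∈ T, v ⬝ᵥ w = 0) (hs : IsTetrad T s)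
    (ht : IsTetrad T t) {x : α} (hxs : x ∈ s) (hxt : x ∈ t) (hst : s ≠ t) :
    IsTetrad T (s ∆ t) := by
  refine ⟨?_, charVec_symmDiff s t ▸ T.add_mem hs.2 ht.2⟩
  have hinter := hs.card_inter_eq_two hT ht hxs hxt hst
  have hcs := Finset.card_sdiff_add_card_inter s t
  have hct := Finset.card_sdiff_add_card_inter t s
  rw [Finset.inter_comm] at hct
  have hs4 := hs.1
  have ht4 := ht.1
  rw [symmDiff_def, Finset.sup_eq_union, Finset.card_union_of_disjoint disjoint_sdiff_sdiff]
  omega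

theorem exists_isTetrad_mem_mem [IsPreprimitive P α] (hTP : IsInvariantCode P T)
    (hT : ∀ v ∈ T, ∀ w ∈ T, v ⬝ᵥ w = 0) (ht : IsTetrad T t) {x y : α} (hxy : x ≠ y) :
    ∃ q, IsTetrad T q ∧ x ∈ q ∧ y ∈ q := by
  let s : Setoid α :=
    { r := fun x y => x = y ∨ ∃ q, IsTetrad T q ∧ x ∈ q ∧ y ∈ q
      iseqv := ⟨fun x => Or.inl rfl, ?_, ?_⟩ }
  rotate_left
  · rintro x y (h | ⟨q, hq, hx, hy⟩)
    · exact Or.inl h.symm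
    · exact Or.inr ⟨q, hq, hy, hx⟩
  · rintro x y w (rfl | ⟨q, hq, hx, hy⟩)
    · exact id
    rintro (rfl | ⟨q', hq', hy', hw⟩)
    · exact Or.inr ⟨q, hq, hx, hy⟩
    right
    by_cases hwq : w ∈ q
    · exact ⟨q, hq, hx, hwq⟩
    by_cases hxq' : x ∈ q'
    · exact ⟨q', hq', hxq', hw⟩
    exact ⟨_, hq.symmDiff hT hq' hy hy' (fun e => hwq (e ▸ hw)),
      Finset.mem_symmDiff.2 (Or.inl ⟨hx, hxq'⟩), Finset.mem_symmDiff.2 (Or.inr ⟨hw, hwq⟩)⟩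
  have hs : ∀ (p : P) (x y : α), s x y → s (p • x) (p • y) := by
    rintro p x y (rfl | ⟨q, hq, hx, hy⟩)
    · exact Or.inl rfl
    · exact Or.inr ⟨_, hq.map hTP p.2, Finset.mem_map_of_mem _ hx, Finset.mem_map_of_mem _ hy⟩
  rcases setoid_eq_bot_or_eq_top s hs with hbot | htop
  · obtain ⟨a, ha, c, hc, hac⟩ := Finset.one_lt_card.1 (show 1 < t.card by rw [ht.1]; norm_num)
    exact absurd (show s a c from Or.inr ⟨t, ht, ha, hc⟩) (by rw [hbot]; exact hac)
  · exact (show s x y by rw [htop]; trivial).resolve_left hxy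

theorem exists_isTetrad_mem_notMem [IsPreprimitive P α] (hTP : IsInvariantCode P T)
    (hT : ∀ v ∈ T, ∀ w ∈ T, v ⬝ᵥ w = 0) (h1 : 1 ∉ T) (ht : IsTetrad T t) {x y : α}
    (hxy : x ≠ y) : ∃ q, IsTetrad T q ∧ x ∈ q ∧ y ∉ q := by
  obtain ⟨q, hq, hne⟩ : ∃ q, IsTetrad T q ∧ ¬ (x ∈ q ↔ y ∈ q) := by
    by_contra! hcon
    let s : Setoid α :=
      { r := fun x y => ∀ q, IsTetrad T q → (x ∈ q ↔ y ∈ q)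
        iseqv := ⟨fun x q _ => Iff.rfl, fun h q hq => (h q hq).symm,
          fun h h' q hq => (h q hq).trans (h' q hq)⟩ }
    have hs : ∀ (p : P) (x y : α), s x y → s (p • x) (p • y) := fun p x y h q hq => by
      have hpq := h _ (hq.map hTP (inv_mem p.2))
      rwa [Finset.mem_map_equiv, Finset.mem_map_equiv] at hpq
    rcases setoid_eq_bot_or_eq_top s hs with hbot | htop
    · exact absurd (show s x y from hcon) (by rw [hbot]; exact hxy)
    · obtain ⟨a, ha⟩ := Finset.card_pos.1 (show 0 < t.card by rw [ht.1]; norm_num)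
      have huniv : t = Finset.univ := Finset.eq_univ_of_forall fun z =>
        ((show s a z by rw [htop]; trivial) t ht).1 ha
      exact h1 (charVec_univ (α := α) ▸ huniv ▸ ht.2)
  by_cases hx : x ∈ q
  · exact ⟨q, hq, hx, by tauto⟩
  · have hy : y ∈ q := by tauto
    obtain ⟨q', hq', hxq', hyq'⟩ := exists_isTetrad_mem_mem hTP hT ht hxy
    refine ⟨_, hq'.symmDiff hT hq hyq' hy (fun e => hx (e ▸ hxq')), ?_, ?_⟩
    · exact Finset.mem_symmDiff.2 (Or.inl ⟨hxq', hx⟩)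
    · simp [Finset.mem_symmDiff, hy, hyq']

theorem exists_fano_isTetrad [IsPreprimitive P α] (hTP : IsInvariantCode P T)
    (hT : ∀ v ∈ T, ∀ w ∈ T, v ⬝ᵥ w = 0) (h1 : 1 ∉ T) (ht : IsTetrad T t) :
    ∃ f : Fin 7 ↪ α, ∀ k, IsTetrad T ((fanoTetrad k).map f) := by
  obtain ⟨x, hxt, a, hat, hxa⟩ := Finset.one_lt_card.1 (show 1 < t.card by simp [ht.1])
  obtain ⟨u, hu, hxu, hau⟩ := exists_isTetrad_mem_notMem hTP hT h1 ht hxa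
  have htu := ht.card_inter_eq_two hT hu hxt hxu fun h => hau (h ▸ hat)
  obtain ⟨c, hc, hcx⟩ := Finset.exists_mem_ne (show 1 < (t ∩ u).card by simp [htu]) x
  obtain ⟨q, hq, hxq, hcq⟩ := exists_isTetrad_mem_notMem hTP hT h1 ht hcx.symm
  have hinter : t ∩ u = {x, c} := (Finset.eq_of_subset_of_card_le (by
    simp [Finset.insert_subset_iff, hxt, hxu, hc]) (by simp [htu, hcx.symm])).symm
  rw [Finset.mem_inter] at hc
  have htq := ht.card_inter_eq_two hT hq hxt hxq fun h => hcq (h ▸ hc.1)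
  have huq := hu.card_inter_eq_two hT hq hxu hxq fun h => hcq (h ▸ hc.2)
  have htetrad : ∀ k, IsTetrad T (![t, u, q] k) := by simp [Fin.forall_fin_succ, ht, hu, hq]
  obtain ⟨f, hf⟩ := exists_fano_embedding (t := ![t, u, q]) (x := x) (fun k => (htetrad k).1)
    (by simp [Fin.forall_fin_succ, htu, htq, huq, Finset.inter_comm u t, Finset.inter_comm q])
    (by simp [hinter, Finset.insert_inter_of_mem hxq, Finset.singleton_inter_of_notMem hcq])
  exact ⟨f, fun k => hf k ▸ htetrad k⟩

theorem charVec_insert_map_univ_mem [IsPreprimitive P α] (hTP : IsInvariantCode P T)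
    (hT : ∀ v ∈ T, ∀ w ∈ T, v ⬝ᵥ w = 0) {f : Fin 7 ↪ α}
    (hf : ∀ k, IsTetrad T ((fanoTetrad k).map f)) {y : α} (hy : y ∉ Finset.univ.map f) :
    charVec (insert y (Finset.univ.map f)) ∈ T := by
  have hyf : ∀ A : Finset (Fin 7), y ∉ A.map f := fun A h =>
    hy (Finset.map_subset_map.2 (Finset.subset_univ A) h)
  have hfy : f 0 ≠ y := fun h => hyf {0} (by simp [h])
  obtain ⟨q, hq, hfq, hyq⟩ := exists_isTetrad_mem_mem hTP hT (hf 0) hfy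
  let A : Finset (Fin 7) := Finset.univ.filter fun i => f i ∈ q
  have hAq : insert y (A.map f) ⊆ q := by simp [hyq, A, Finset.subset_iff]
  have hcardA : (insert y (A.map f)).card = A.card + 1 := by
    rw [Finset.card_insert_of_notMem (hyf A), Finset.card_map]
  have hA3 : A.card ≤ 3 := by
    have := Finset.card_le_card hAq
    rw [hcardA, hq.1] at this
    omega
  have hinter : ∀ k, (A ∩ fanoTetrad k).card = 2 := fun k => by
    have h0 : f 0 ∈ (fanoTetrad k).map f := Finset.mem_map_of_mem f (by revert k; decide)
    rw [← hq.card_inter_eq_two hT (hf k) hfq h0 fun h => hyf _ (h ▸ hyq), ← Finset.card_map f]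
    congr 1
    ext z
    simp only [Finset.mem_map, Finset.mem_inter, Finset.mem_filter, Finset.mem_univ, true_and, A]
    grind
  obtain ⟨hA, k, l, hkl⟩ := exists_symmDiff_fanoTetrad_eq_univ A (by simp [A, hfq]) hA3 hinter
  have hqA : q = insert y (A.map f) :=
    (Finset.eq_of_subset_of_card_le hAq (by rw [hcardA, hq.1, hA])).symm
  have huniv : insert y (Finset.univ.map f) =
      q ∆ (fanoTetrad k).map f ∆ (fanoTetrad l).map f := by
    have hyk := hyf (fanoTetrad k)
    have hyl := hyf (fanoTetrad l)
    rw [← hkl, hqA]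
    ext z
    simp only [Finset.mem_symmDiff, Finset.mem_insert, Finset.mem_map] at hyk hyl ⊢
    grind [f.injective]
  rw [huniv, charVec_symmDiff, charVec_symmDiff]
  exact T.add_mem (T.add_mem hq.2 (hf k).2) (hf l).2

theorem charVec_pair_notMem [IsPreprimitive P α] (hTP : IsInvariantCode P T)
    (hT : ∀ v ∈ T, ∀ w ∈ T, v ⬝ᵥ w = 0) {x y z : α} (hxy : x ≠ y) (hxz : x ≠ z) (hyz : y ≠ z) :
    charVec {y, z} ∉ T := by
  intro h
  rw [charVec_pair hyz] at h
  have hpair : ∀ {u v : α}, u ≠ v → charVec {u, v} ∈ T := fun huv =>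
    charVec_pair huv ▸ single_sub_single_mem hTP hyz h _ _
  have hxx := hT _ (hpair hxy) _ (hpair hxz)
  rw [charVec_dotProduct_charVec, show ({x, y} : Finset α) ∩ {x, z} = {x} by grind] at hxx
  simp at hxx

theorem surjective_of_fano_isTetrad [IsPreprimitive P α] (hTP : IsInvariantCode P T)
    (hT : ∀ v ∈ T, ∀ w ∈ T, v ⬝ᵥ w = 0) (h1 : 1 ∉ T) {f : Fin 7 ↪ α}
    (hf : ∀ k, IsTetrad T ((fanoTetrad k).map f)) : Function.Surjective f := by
  by_contra hsurj
  obtain ⟨y, hy⟩ : ∃ y, y ∉ Finset.univ.map f := by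
    simpa [Function.Surjective] using hsurj
  have hyT := charVec_insert_map_univ_mem hTP hT hf hy
  obtain ⟨z, hz⟩ : ∃ z, z ∉ insert y (Finset.univ.map f) := by
    by_contra! h
    rw [Finset.eq_univ_of_forall h, charVec_univ] at hyT
    exact h1 hyT
  rw [Finset.mem_insert, not_or] at hz
  have hzT := charVec_insert_map_univ_mem hTP hT hf hz.2
  have hpair : {y, z} = insert y (Finset.univ.map f) ∆ insert z (Finset.univ.map f) := by
    ext u
    simp only [Finset.mem_symmDiff, Finset.mem_insert, Finset.mem_singleton]
    grind
  have h0 : ∀ u, u ∉ Finset.univ.map f → f 0 ≠ u := fun u hu h => hu (by simp [← h])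
  refine charVec_pair_notMem hTP hT (h0 y hy) (h0 z hz.2) (Ne.symm hz.1) ?_
  rw [hpair, charVec_symmDiff]
  exact T.add_mem hyT hzT

theorem mem_or_add_one_mem_of_orthogonal [IsPreprimitive P α] (hTP : IsInvariantCode P T)
    (hT : ∀ v ∈ T, ∀ w ∈ T, v ⬝ᵥ w = 0) (h1 : 1 ∉ T) (ht : IsTetrad T t) {w : α → ZMod 2}
    (hw : ∀ v ∈ T, w ⬝ᵥ v = 0) : w ∈ T ∨ w + 1 ∈ T := by
  obtain ⟨f, hf⟩ := exists_fano_isTetrad hTP hT h1 ht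
  obtain ⟨c, e, hwf⟩ := exists_eq_sum_smul_charVec_fanoTetrad (w ∘ f) fun k => by
    have hk := hw _ (hf k).2
    rwa [dotProduct_charVec, Finset.sum_map] at hk
  obtain ⟨v, hv, hwv⟩ : ∃ v ∈ T, w = v + e • 1 := by
    refine ⟨∑ k, c k • charVec ((fanoTetrad k).map f),
      T.sum_mem fun k _ => T.smul_mem _ (hf k).2, funext fun x => ?_⟩
    obtain ⟨i, rfl⟩ := surjective_of_fano_isTetrad hTP hT h1 hf x
    simpa [charVec] using congrFun hwf i
  rcases (by decide : ∀ e : ZMod 2, e = 0 ∨ e = 1) e with rfl | rfl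
  · exact Or.inl (by simpa [hwv] using hv)
  · exact Or.inr (by rwa [hwv, one_smul, add_assoc, ZModModule.add_self, add_zero])

end Tetrads

theorem isMulCommutative_of_forall_mul_self_eq_one {G : Type*} [Group G] {E : Subgroup G}
    (hE : ∀ g ∈ E, g * g = 1) : IsMulCommutative E :=
  .of_setLike_mul_comm fun a ha b hb => by
    have hinv : ∀ g ∈ E, g⁻¹ = g := fun g hg => inv_eq_of_mul_eq_one_left (hE g hg)
    rw [← hinv _ (mul_mem ha hb), mul_inv_rev, hinv a ha, hinv b hb]

theorem IsInvariantCode.inf {R α : Type*} [Semiring R] {P : Subgroup (Perm α)}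
    {V W : Submodule R (α → R)} (hV : IsInvariantCode P V) (hW : IsInvariantCode P W) :
    IsInvariantCode P (V ⊓ W) :=
  fun p hp w hw => ⟨hV p hp w hw.1, hW p hp w hw.2⟩

section DualCode

variable {R α : Type*} [CommSemiring R] [Fintype α]

/-- The dual of a linear code with respect to the standard dot product. -/
def dualCode (W : Submodule R (α → R)) : Submodule R (α → R) where
  carrier := {v | ∀ w ∈ W, w ⬝ᵥ v = 0}
  zero_mem' _ _ := dotProduct_zero _
  add_mem' hu hv w hw := by rw [dotProduct_add, hu w hw, hv w hw, add_zero]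
  smul_mem' c v hv w hw := by rw [dotProduct_smul, hv w hw, smul_zero]

theorem IsInvariantCode.dualCode {P : Subgroup (Perm α)} {W : Submodule R (α → R)}
    (hW : IsInvariantCode P W) : IsInvariantCode P (dualCode W) :=
  fun p hp v hv w hw => by
    have hwp : w ∘ ⇑p⁻¹ ⬝ᵥ v = 0 := hv _ (hW p⁻¹ (inv_mem hp) w hw)
    rwa [show ⇑p⁻¹ = p.symm from rfl, comp_equiv_symm_dotProduct] at hwp

end DualCode

theorem even_card_of_forall_mem_iff {α : Type*} {τ : Perm α} (hτ : τ * τ = 1)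
    {A : Finset α} (hA : ∀ i, τ i ∈ A ↔ i ∈ A) (hfix : ∀ i ∈ A, τ i ≠ i) : Even A.card := by
  have hsum : ∑ _ ∈ A, (1 : ZMod 2) = 0 :=
    Finset.sum_involution (fun i _ => τ i) (fun _ _ => by decide) (fun i hi _ => hfix i hi)
      (fun i hi => (hA i).2 hi) fun i _ => congrFun (congrArg DFunLike.coe hτ) i
  simpa [ZMod.natCast_eq_zero_iff_even] using hsum

section LargeOrbit

variable {α : Type*} [Finite α] {P E : Subgroup (Perm α)}

theorem exists_fixed_codeword {p : ℕ} [Fact p.Prime] (hE : IsPGroup p E)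
    {W : Submodule (ZMod p) (α → ZMod p)} (hW : IsInvariantCode E W) (hne : W ≠ ⊥) :
    ∃ w ∈ W, w ≠ 0 ∧ ∀ e ∈ E, w ∘ e = w := by
  let _ : MulAction E W :=
    { smul e w := ⟨w.1 ∘ ⇑(e⁻¹ : Perm α), hW _ (inv_mem e.2) w w.2⟩
      one_smul w := rfl
      mul_smul e f w := Subtype.ext <| by
        change w.1 ∘ ⇑((e * f : Perm α)⁻¹) = (w.1 ∘ ⇑(f⁻¹ : Perm α)) ∘ ⇑(e⁻¹ : Perm α)
        rw [mul_inv_rev, Perm.coe_mul, Function.comp_assoc] }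
  have hdvd : p ∣ Nat.card W := by
    have : Nontrivial W := Submodule.nontrivial_iff_ne_bot.2 hne
    rw [Module.natCard_eq_pow_finrank (K := ZMod p), Nat.card_zmod]
    exact dvd_pow_self p Module.finrank_pos.ne'
  obtain ⟨w, hw, hw0⟩ := hE.exists_fixed_point_of_prime_dvd_card_of_fixed_point W hdvd
    (a := 0) fun e => rfl
  refine ⟨w, w.2, fun h => hw0 (Subtype.ext h.symm), fun e he => ?_⟩
  have hwe : w.1 ∘ ⇑(e⁻¹)⁻¹ = w := congrArg Subtype.val (hw ⟨e⁻¹, inv_mem he⟩)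
  rwa [inv_inv] at hwe

theorem exists_single_sub_single_mem_of_large_orbit [DecidableEq α] [IsPreprimitive P α]
    {p : ℕ} [Fact p.Prime] (hEP : E ≤ P) (hE : IsPGroup p E) {x : α}
    (hx : Nat.card α ≤ (orbit E x).ncard + 1) {W : Submodule (ZMod p) (α → ZMod p)}
    (hW : IsInvariantCode P W) (hne : W ≠ ⊥) (h1 : 1 ∉ W) :
    ∃ a c, a ≠ c ∧ Pi.single a 1 - Pi.single c 1 ∈ W := by
  obtain ⟨w, hw, hw0, hfix⟩ := exists_fixed_codeword hE (fun g hg => hW g (hEP hg)) hne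
  have horbit : ∀ i ∈ orbit E x, w i = w x := by
    rintro _ ⟨g, rfl⟩
    exact congrFun (hfix g g.2) x
  obtain ⟨y, hy⟩ : ∃ y, w y ≠ w x := by
    by_contra! h
    have hwx : w = w x • 1 := funext fun y => by simpa using h y
    have hx0 : w x ≠ 0 := fun h0 => hw0 (by rw [hwx, h0, zero_smul])
    exact h1 ((W.smul_mem_iff hx0).1 (hwx ▸ hw))
  have hyx : ∀ i, i ≠ y → w i = w x := fun i hi => by
    by_contra hix
    have hlt : (insert y (orbit E x)).ncard < Nat.card α := by
      rw [← Set.ncard_univ]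
      refine Set.ncard_lt_ncard (Set.ssubset_univ_iff.2 fun h => ?_)
      exact (h ▸ Set.mem_univ i : i ∈ insert y (orbit E x)).elim hi fun h => hix (horbit i h)
    rw [Set.ncard_insert_of_notMem fun h => hy (horbit y h)] at hlt
    omega
  have hwy : w = (w y - w x) • Pi.single y 1 + w x • 1 := funext fun i => by
    by_cases hi : i = y
    · simp [hi]
    · simp [hi, hyx i hi]
  obtain ⟨⟨q, hq⟩, hqx : q x = y⟩ := exists_smul_eq P x y
  refine ⟨y, x, fun h => hy (by rw [h]), (W.smul_mem_iff (sub_ne_zero.2 hy)).1 ?_⟩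
  convert W.sub_mem hw (hW q hq w hw) using 1
  have hsingle : (Pi.single y 1 : α → ZMod p) ∘ q = Pi.single x 1 := funext fun i => by
    simp [Pi.single_apply, ← hqx]
  conv_rhs => rw [hwy]
  rw [Pi.add_comp, Pi.smul_comp, Pi.smul_comp, Pi.one_comp, hsingle]
  module

end LargeOrbit

section SmallSupport

variable {α : Type*} [Fintype α] [DecidableEq α] {P : Subgroup (Perm α)}
  {W : Submodule (ZMod 2) (α → ZMod 2)} {τ : Perm α}

theorem comp_eq_or_card_support_eq_four (hτP : τ ∈ P) (hτ2 : τ * τ = 1)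
    (hτ4 : τ.support.card ≤ 4) (hW : IsInvariantCode P W)
    (hpair : ∀ x y, x ≠ y → charVec {x, y} ∉ W) {w : α → ZMod 2} (hw : w ∈ W) :
    (∀ i, w (τ i) = w i) ∨ τ.support.card = 4 ∧ ∀ i ∈ τ.support, w (τ i) ≠ w i := by
  have hττ : ∀ i, τ (τ i) = i := fun i => by rw [← Perm.mul_apply, hτ2, Perm.one_apply]
  let A : Finset α := Finset.univ.filter fun i => w (τ i) ≠ w i
  have hAτ : A ⊆ τ.support := fun i hi => by
    rw [Perm.mem_support]
    exact fun h => (Finset.mem_filter.1 hi).2 (congrArg w h)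
  have hAeven : Even A.card := even_card_of_forall_mem_iff hτ2
    (fun i => by simp [A, hττ, eq_comm]) fun i hi => Perm.mem_support.1 (hAτ hi)
  have hAW : charVec A ∈ W := by
    convert W.add_mem hw (hW τ hτP w hw) using 1
    ext i
    have hone : ∀ a c : ZMod 2, (if c ≠ a then 1 else 0) = a + c := by decide
    simpa [charVec, A] using hone (w i) (w (τ i))
  have hA2 : A.card ≠ 2 := fun h => by
    obtain ⟨x, y, hxy, hA⟩ := Finset.card_eq_two.1 h
    exact hpair x y hxy (hA ▸ hAW)
  have hA4 := Finset.card_le_card hAτ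
  obtain h0 | h4 : A.card = 0 ∨ A.card = 4 := by
    obtain ⟨k, hk⟩ := hAeven
    omega
  · left
    simpa [A, Finset.filter_eq_empty_iff] using Finset.card_eq_zero.1 h0
  · have hA : A = τ.support := Finset.eq_of_subset_of_card_le hAτ (by omega)
    exact Or.inr ⟨hA ▸ h4, fun i hi => by simpa [A] using hA.ge hi⟩

theorem isTetrad_support [IsPreprimitive P α] (hτP : τ ∈ P) (hτ1 : τ ≠ 1) (hτ2 : τ * τ = 1)
    (hτ4 : τ.support.card ≤ 4) (hW : IsInvariantCode P W) (hne : W ≠ ⊥) (h1 : 1 ∉ W)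
    (hpair : ∀ x y, x ≠ y → charVec {x, y} ∉ W) : IsTetrad W τ.support := by
  obtain ⟨x, hx⟩ : ∃ x, τ x ≠ x := by
    by_contra! h
    exact hτ1 (Perm.ext h)
  obtain ⟨w, hw, hwx⟩ := exists_codeword_apply_ne hW h1 hne hx
  obtain ⟨hcard, hflip⟩ := (comp_eq_or_card_support_eq_four hτP hτ2 hτ4 hW hpair hw).resolve_left
    fun h => hwx (h x)
  refine ⟨hcard, ?_⟩
  convert W.add_mem hw (hW τ hτP w hw) using 1
  ext i
  have hone : ∀ a c : ZMod 2, c ≠ a → 1 = a + c := by decide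
  by_cases hi : i ∈ τ.support
  · simpa [charVec, hi] using hone _ _ (hflip i hi)
  · simp [charVec, hi, Perm.notMem_support.1 hi, CharTwo.add_self_eq_zero]

theorem dotProduct_charVec_support_eq_zero (hτP : τ ∈ P) (hτ2 : τ * τ = 1)
    (hτ4 : τ.support.card ≤ 4) (hW : IsInvariantCode P W)
    (hpair : ∀ x y, x ≠ y → charVec {x, y} ∉ W) {w : α → ZMod 2} (hw : w ∈ W) :
    w ⬝ᵥ charVec τ.support = 0 := by
  rw [dotProduct_charVec]
  rcases comp_eq_or_card_support_eq_four hτP hτ2 hτ4 hW hpair hw with hfix | ⟨hcard, hflip⟩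
  · refine Finset.sum_involution (fun i _ => τ i) (fun i _ => ?_)
      (fun i hi _ => Perm.mem_support.1 hi) (fun i hi => Perm.apply_mem_support.2 hi)
      fun i _ => congrFun (congrArg DFunLike.coe hτ2) i
    rw [hfix, CharTwo.add_self_eq_zero]
  · have hval : ∀ a c : ZMod 2, c ≠ a → a.val + c.val = 1 := by decide
    have hτsum : ∑ i ∈ τ.support, (w (τ i)).val = ∑ i ∈ τ.support, (w i).val :=
      Finset.sum_equiv τ (fun i => Perm.apply_mem_support.symm) fun _ _ => rfl
    have hsum : ∑ i ∈ τ.support, (w i).val + ∑ i ∈ τ.support, (w (τ i)).val = 4 := by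
      rw [← Finset.sum_add_distrib, Finset.sum_congr rfl fun i hi => hval _ _ (hflip i hi)]
      simpa using hcard
    have htwo : ∑ i ∈ τ.support, (w i).val = 2 := by omega
    have hcast := congrArg (Nat.cast : ℕ → ZMod 2) htwo
    simpa [show (2 : ZMod 2) = 0 from rfl] using hcast

theorem le_of_isTetrad [IsPreprimitive P α] {W₁ W₂ : Submodule (ZMod 2) (α → ZMod 2)}
    (hW₁ : IsInvariantCode P W₁) (hW₂ : IsInvariantCode P W₂) {t : Finset α}
    (ht₁ : IsTetrad W₁ t) (ht₂ : IsTetrad W₂ t) (hd₁ : ∀ w ∈ W₁, w ⬝ᵥ charVec t = 0)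
    (hd₂ : ∀ w ∈ W₂, w ⬝ᵥ charVec t = 0) (h1 : 1 ∉ W₁) : W₁ ≤ W₂ := by
  have hT := (hW₁.inf hW₂).inf (hW₁.dualCode.inf hW₂.dualCode)
  intro w hw
  rcases mem_or_add_one_mem_of_orthogonal hT (fun v hv u hu => hu.2.1 v hv.1.1) (fun h => h1 h.1.1)
    ⟨ht₁.1, ⟨ht₁.2, ht₂.2⟩, hd₁, hd₂⟩ (fun v hv => hv.2.1 w hw) with h | h
  · exact h.1.2
  · exact absurd ((W₁.add_mem_iff_right hw).1 h.1.1) h1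

end SmallSupport

open scoped IsMulCommutative in
theorem le_or_le_of_isInvariantCode {α : Type*} [Finite α] {P E : Subgroup (Perm α)}
    [IsPreprimitive P α] (hα : 3 < Nat.card α) (hEP : E ≤ P) (hE : ∀ g ∈ E, g * g = 1)
    (hcard : 2 ^ Nat.card α ≤ 8 * Nat.card E ^ 2) {V W₁ W₂ : Submodule (ZMod 2) (α → ZMod 2)}
    (h1 : 1 ∉ V) (hV₁ : W₁ ≤ V) (hV₂ : W₂ ≤ V) (hW₁ : IsInvariantCode P W₁)
    (hW₂ : IsInvariantCode P W₂) : W₁ ≤ W₂ ∨ W₂ ≤ W₁ := by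
  classical
  have := Fintype.ofFinite α
  have hVtop : V ≠ ⊤ := fun h => h1 (h ▸ Submodule.mem_top)
  have hle : ∀ {W : Submodule (ZMod 2) (α → ZMod 2)}, W ≤ V → IsInvariantCode P W →
      ∀ {x y}, x ≠ y → Pi.single x 1 - Pi.single y 1 ∈ W → V ≤ W := fun hWV hW _ _ hxy h =>
    le_of_forall_single_sub_single_mem hWV hVtop (single_sub_single_mem hW hxy h)
  by_cases hb₁ : W₁ = ⊥
  · exact Or.inl (hb₁ ▸ bot_le)
  by_cases hb₂ : W₂ = ⊥
  · exact Or.inr (hb₂ ▸ bot_le)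
  by_cases hp₁ : V ≤ W₁
  · exact Or.inr (hV₂.trans hp₁)
  by_cases hp₂ : V ≤ W₂
  · exact Or.inl (hV₁.trans hp₂)
  have hpair₁ : ∀ x y, x ≠ y → charVec {x, y} ∉ W₁ := fun x y hxy h =>
    hp₁ (hle hV₁ hW₁ hxy (charVec_pair hxy ▸ h))
  have hpair₂ : ∀ x y, x ≠ y → charVec {x, y} ∉ W₂ := fun x y hxy h =>
    hp₂ (hle hV₂ hW₂ hxy (charVec_pair hxy ▸ h))
  have := isMulCommutative_of_forall_mul_self_eq_one hE
  have hE2 : IsPGroup 2 E := fun g => ⟨1, Subtype.ext (by simpa [sq] using hE g g.2)⟩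
  rcases exists_moved_le_four_or_large_orbit hE2 hcard hα with ⟨⟨τ, hτE⟩, hτ1, hτ4⟩ | ⟨x, hx⟩
  · replace hτ1 : τ ≠ 1 := fun h => hτ1 (Subtype.ext h)
    replace hτ4 : τ.support.card ≤ 4 := by
      rw [← Set.ncard_coe_finset, Perm.coe_support_eq_set_support]
      exact hτ4
    have hτP := hEP hτE
    have hτ2 := hE τ hτE
    exact Or.inl <| le_of_isTetrad hW₁ hW₂
      (isTetrad_support hτP hτ1 hτ2 hτ4 hW₁ hb₁ (fun h => h1 (hV₁ h)) hpair₁)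
      (isTetrad_support hτP hτ1 hτ2 hτ4 hW₂ hb₂ (fun h => h1 (hV₂ h)) hpair₂)
      (fun w => dotProduct_charVec_support_eq_zero hτP hτ2 hτ4 hW₁ hpair₁)
      (fun w => dotProduct_charVec_support_eq_zero hτP hτ2 hτ4 hW₂ hpair₂)
      fun h => h1 (hV₁ h)
  · obtain ⟨a, c, hac, h⟩ := exists_single_sub_single_mem_of_large_orbit hEP hE2 hx hW₁ hb₁
      fun h => h1 (hV₁ h)
    exact absurd (hle hV₁ hW₁ hac h) hp₁

section PrimitiveGroups

variable {α : Type*} {P N A B : Subgroup (Perm α)}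

theorem isPretransitive_of_le_normalizer [IsPreprimitive P α]
    (hP : P ≤ Subgroup.normalizer (N : Set (Perm α))) (hN : N ≠ ⊥) : IsPretransitive N α := by
  have hinv : ∀ (p : P) x y, orbitRel N α x y → orbitRel N α (p • x) (p • y) := by
    rintro p _ y ⟨g, rfl⟩
    exact ⟨⟨_, (Subgroup.mem_normalizer_iff.1 (hP p.2) g).1 g.2⟩,
      congrArg p.1 (congrArg g.1 (p.1.symm_apply_apply y))⟩
  rcases setoid_eq_bot_or_eq_top _ hinv with h | h
  · refine absurd ((Subgroup.eq_bot_iff_forall N).2 fun g hg => Perm.ext fun x => ?_) hN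
    have hgx : orbitRel N α (g x) x := ⟨⟨g, hg⟩, rfl⟩
    rwa [h] at hgx
  · exact pretransitive_iff_subsingleton_quotient N α |>.2 (Quotient.subsingleton_iff.2 h)

theorem eq_one_of_mem_centralizer_of_apply_eq [IsPretransitive B α] {a : Perm α}
    (ha : a ∈ Subgroup.centralizer (B : Set (Perm α))) {x : α} (hx : a x = x) : a = 1 := by
  refine Perm.ext fun y => ?_
  obtain ⟨g, rfl⟩ := exists_smul_eq B x y
  calc a (g.1 x) = g.1 (a x) := DFunLike.congr_fun (ha g.1 g.2).symm x
    _ = g.1 x := congrArg g.1 hx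

theorem card_eq_of_isPretransitive_of_le_centralizer [Nonempty α] [IsPretransitive A α]
    [IsPretransitive B α] (hAB : A ≤ Subgroup.centralizer B) : Nat.card A = Nat.card α := by
  obtain ⟨x⟩ := ‹Nonempty α›
  refine Nat.card_eq_of_bijective (fun a : A => a • x) ⟨fun a c h => ?_, exists_smul_eq A x⟩
  refine (inv_mul_eq_one.1 (Subtype.ext ?_)).symm
  exact eq_one_of_mem_centralizer_of_apply_eq (hAB (c⁻¹ * a).2) (Perm.inv_eq_iff_eq.2 h)

theorem isPretransitive_of_le_normalizer_of_le_centralizer [IsPreprimitive P α]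
    (hP : P ≤ A ⊔ B) (hAB : A ≤ Subgroup.centralizer B) (hNA : N ≤ A)
    (hA : A ≤ Subgroup.normalizer (N : Set (Perm α))) (hN : N ≠ ⊥) : IsPretransitive N α :=
  isPretransitive_of_le_normalizer (hP.trans (sup_le hA ((Subgroup.le_centralizer_iff.1
    (hNA.trans hAB)).trans (Subgroup.centralizer_le_normalizer _)))) hN

theorem card_eq_of_le_centralizer [IsPreprimitive P α] (hP : P ≤ A ⊔ B)
    (hAB : A ≤ Subgroup.centralizer B) (hNA : N ≤ A)
    (hA : A ≤ Subgroup.normalizer (N : Set (Perm α))) (hN : N ≠ ⊥) (hB : B ≠ ⊥) :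
    Nat.card N = Nat.card α := by
  have : Nonempty α := not_isEmpty_iff.1 fun _ => hN (Subsingleton.elim _ _)
  have := isPretransitive_of_le_normalizer_of_le_centralizer hP hAB hNA hA hN
  have := isPretransitive_of_le_normalizer_of_le_centralizer (hP.trans (sup_comm A B).le)
    (Subgroup.le_centralizer_iff.1 hAB) le_rfl Subgroup.le_normalizer hB
  exact card_eq_of_isPretransitive_of_le_centralizer (hNA.trans hAB)

theorem eq_one_of_mem_centralizer [IsPreprimitive P α] (hα : 3 ≤ Nat.card α) {q : Perm α}
    (hq : q * q = 1) (hqP : q ∈ Subgroup.centralizer (P : Set (Perm α))) : q = 1 := by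
  by_contra hq1
  have : Nonempty α := (Nat.card_pos_iff.1 (by lia)).1
  have := isPretransitive_of_le_normalizer (P := P) (N := Subgroup.zpowers q)
    ((Subgroup.le_centralizer_iff.1 (Subgroup.zpowers_le.2 hqP)).trans
      (Subgroup.centralizer_le_normalizer _)) (mt Subgroup.zpowers_eq_bot.1 hq1)
  have horder : orderOf q = 2 := orderOf_eq_prime (by rw [sq, hq]) hq1
  have hcard : Nat.card (Subgroup.zpowers q) = 2 := by rw [Nat.card_zpowers, horder]
  have : Finite (Subgroup.zpowers q) := Nat.finite_of_card_ne_zero (by lia)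
  have hle := Nat.card_le_card_of_surjective _
    (exists_smul_eq (Subgroup.zpowers q) (Classical.arbitrary α))
  lia

theorem mem_normalizer_zpowers_of_conj_eq_inv {G : Type*} [Group G] {g w : G}
    (h : g * w * g⁻¹ = w⁻¹) : g ∈ Subgroup.normalizer (Subgroup.zpowers w : Set G) := by
  rw [Subgroup.mem_normalizer_iff_map_conj_eq, MonoidHom.map_zpowers]
  exact (congrArg Subgroup.zpowers h).trans Subgroup.zpowers_inv

theorem commute_of_closure_pair_le_centralizer [Finite α] [IsPreprimitive P α] {u v : Perm α}
    (hP : P ≤ Subgroup.closure {u, v} ⊔ B) (hu : u * u = 1) (hv : v * v = 1) (hB : B ≠ ⊥)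
    (huvB : Subgroup.closure {u, v} ≤ Subgroup.centralizer B) : Commute u v := by
  by_contra huv
  have huD : u ∈ Subgroup.closure {u, v} := Subgroup.subset_closure (Or.inl rfl)
  have hvD : v ∈ Subgroup.closure {u, v} := Subgroup.subset_closure (Or.inr rfl)
  have hinv : (u * v)⁻¹ = v * u := by
    rw [mul_inv_rev, inv_eq_of_mul_eq_one_left hu, inv_eq_of_mul_eq_one_left hv]
  have hrot : Subgroup.zpowers (u * v) ≤ Subgroup.closure {u, v} :=
    Subgroup.zpowers_le.2 (mul_mem huD hvD)
  have hrot1 : Subgroup.zpowers (u * v) ≠ ⊥ := fun h => by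
    have huv1 := Subgroup.zpowers_eq_bot.1 h
    rw [huv1, inv_one] at hinv
    exact huv (huv1.trans hinv)
  have hnorm : Subgroup.closure {u, v} ≤ Subgroup.normalizer (Subgroup.zpowers (u * v) : Set _) :=
    (Subgroup.closure_le _).2 <| Set.pair_subset
      (mem_normalizer_zpowers_of_conj_eq_inv (by
        rw [hinv, ← mul_assoc, hu, one_mul, inv_eq_of_mul_eq_one_left hu]))
      (mem_normalizer_zpowers_of_conj_eq_inv (by
        rw [hinv, mul_assoc, mul_assoc, mul_inv_cancel, mul_one]))
  have hcard := card_eq_of_le_centralizer hP huvB hrot hnorm hrot1 hB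
  have hcard' := card_eq_of_le_centralizer hP huvB le_rfl Subgroup.le_normalizer
    (ne_bot_of_le_ne_bot hrot1 hrot) hB
  have heq := Subgroup.eq_of_le_of_card_ge hrot (hcard'.trans hcard.symm).le
  rw [← heq] at huD hvD
  obtain ⟨j, hj⟩ := Subgroup.mem_zpowers_iff.1 huD
  obtain ⟨k, hk⟩ := Subgroup.mem_zpowers_iff.1 hvD
  have hjk := (Commute.refl (u * v)).zpow_zpow j k
  rw [hj, hk] at hjk
  exact huv hjk

end PrimitiveGroups

section CommutingParts

section Independent

variable {G ι : Type*} [Group G] {π : ι → G} {S T : Set ι}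

/-- The members of the family `π` indexed by `S` form an independent generating set: none of them
lies in the subgroup generated by the others. -/
def IsIndependentOn (π : ι → G) (S : Set ι) : Prop :=
  ∀ l ∈ S, π l ∉ Subgroup.closure (π '' (S \ {l}))

theorem closure_image_mono (h : S ⊆ T) : Subgroup.closure (π '' S) ≤ Subgroup.closure (π '' T) :=
  Subgroup.closure_mono (Set.image_mono h)

theorem apply_mem_closure_image {l : ι} (hl : l ∈ S) : π l ∈ Subgroup.closure (π '' S) :=
  Subgroup.subset_closure (Set.mem_image_of_mem π hl)

theorem closure_image_union :
    Subgroup.closure (π '' (S ∪ T)) = Subgroup.closure (π '' S) ⊔ Subgroup.closure (π '' T) := by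
  rw [Set.image_union, Subgroup.closure_union]

theorem closure_image_le_centralizer (h : ∀ s ∈ S, ∀ t ∈ T, Commute (π s) (π t)) :
    Subgroup.closure (π '' S) ≤ Subgroup.centralizer (Subgroup.closure (π '' T)) := by
  rw [Subgroup.centralizer_closure, Subgroup.closure_le]
  rintro _ ⟨s, hs, rfl⟩
  exact Subgroup.mem_centralizer_iff.2 fun _ ⟨t, ht, e⟩ => e ▸ (h s hs t ht).symm.eq

theorem IsIndependentOn.notMem_closure (hT : IsIndependentOn π T) {l : ι} (hl : l ∈ T) (hST : S ⊆ T)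
    (hlS : l ∉ S) : π l ∉ Subgroup.closure (π '' S) := fun h =>
  hT l hl (closure_image_mono (Set.subset_sdiff_singleton hST hlS) h)

theorem IsIndependentOn.mono (hT : IsIndependentOn π T) (hST : S ⊆ T) : IsIndependentOn π S :=
  fun _ hl => hT.notMem_closure (hST hl) (Set.sdiff_subset.trans hST) (by simp)

theorem IsIndependentOn.apply_ne_one (hS : IsIndependentOn π S) {l : ι} (hl : l ∈ S) : π l ≠ 1 :=
  fun h => hS l hl (by rw [h]; exact one_mem _)

theorem IsIndependentOn.injOn (hS : IsIndependentOn π S) : Set.InjOn π S := by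
  intro i hi j hj hij
  by_contra hne
  exact hS i hi (hij ▸ apply_mem_closure_image ⟨hj, Ne.symm hne⟩)

theorem IsIndependentOn.closure_ne_bot (hT : IsIndependentOn π T) (hST : S ⊆ T)
    (hS : S.Nonempty) : Subgroup.closure (π '' S) ≠ ⊥ := by
  obtain ⟨l, hl⟩ := hS
  intro hbot
  exact hT.apply_ne_one (hST hl) (Subgroup.mem_bot.1 (hbot ▸ apply_mem_closure_image hl))

theorem IsIndependentOn.closure_lt_closure (hT : IsIndependentOn π T) (hST : S ⊂ T) :
    Subgroup.closure (π '' S) < Subgroup.closure (π '' T) := by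
  obtain ⟨l, hlT, hlS⟩ := Set.exists_of_ssubset hST
  exact lt_of_le_of_ne (closure_image_mono hST.1) fun h =>
    hT.notMem_closure hlT hST.1 hlS (h ▸ apply_mem_closure_image hlT)

theorem two_mul_card_le_of_lt {H K : Subgroup G} [Finite K] (h : H < K) :
    2 * Nat.card H ≤ Nat.card K := by
  obtain ⟨k, hk⟩ := Subgroup.card_dvd_of_le h.le
  have hK : 0 < Nat.card K := Nat.card_pos
  have hk0 : k ≠ 0 := by rintro rfl; lia
  have hk1 : k ≠ 1 := by
    rintro rfl
    exact h.ne (Subgroup.eq_of_le_of_card_ge h.le (by lia))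
  rw [hk, mul_comm]
  exact Nat.mul_le_mul_left _ (by lia)

theorem IsIndependentOn.two_pow_ncard_le [Finite G] [Finite ι] (hS : IsIndependentOn π S) :
    2 ^ S.ncard ≤ Nat.card (Subgroup.closure (π '' S)) := by
  induction S, S.toFinite using Set.Finite.induction_on with
  | empty => simp
  | @insert a S ha _ ih =>
    rw [Set.ncard_insert_of_notMem ha, pow_succ']
    exact (Nat.mul_le_mul_left 2 (ih (hS.mono (Set.subset_insert a S)))).trans
      (two_mul_card_le_of_lt (hS.closure_lt_closure (Set.ssubset_insert ha)))

theorem six_le_card_of_not_commute {D : Subgroup G} [Finite D] {u v : G} (hu : u ∈ D) (hv : v ∈ D)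
    (hu2 : u * u = 1) (huv : ¬ Commute u v) : 6 ≤ Nat.card D := by
  have hnc : ¬ IsMulCommutative D := fun h =>
    huv (congrArg Subtype.val (h.is_comm.comm ⟨u, hu⟩ ⟨v, hv⟩))
  have hu1 : u ≠ 1 := by
    rintro rfl
    exact huv (Commute.one_left v)
  have htwo : 2 ∣ Nat.card D := by
    rw [← orderOf_eq_prime (p := 2) (by rw [sq, hu2]) hu1]
    exact Subgroup.orderOf_dvd_natCard D hu
  have hpos : 0 < Nat.card D := Nat.card_pos
  have h2 : Nat.card D ≠ 2 := fun h => hnc (isCyclic_of_prime_card (p := 2) h).isMulCommutative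
  have h4 : Nat.card D ≠ 4 := fun h =>
    hnc (IsPGroup.isMulCommutative_of_card_eq_prime_sq (p := 2) h)
  lia

end Independent

section Parts

variable {α ι : Type*} {π : ι → Perm α} {S T : Set ι}
  [IsPreprimitive ↥(Subgroup.closure (π '' (S ∪ T))) α]

theorem card_closure_eq_of_commute (hind : IsIndependentOn π (S ∪ T))
    (hcomm : ∀ s ∈ S, ∀ t ∈ T, Commute (π s) (π t)) (hS : S.Nonempty) (hT : T.Nonempty) :
    Nat.card (Subgroup.closure (π '' S)) = Nat.card α :=
  card_eq_of_le_centralizer closure_image_union.le (closure_image_le_centralizer hcomm) le_rfl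
    Subgroup.le_normalizer (hind.closure_ne_bot Set.subset_union_left hS)
    (hind.closure_ne_bot Set.subset_union_right hT)

theorem exists_not_commute (hα : 3 ≤ Nat.card α) (hπ : ∀ i, π i * π i = 1)
    (hind : IsIndependentOn π (S ∪ T)) (hcomm : ∀ s ∈ S, ∀ t ∈ T, Commute (π s) (π t)) {a : ι}
    (ha : a ∈ S) : ∃ c ∈ S, ¬ Commute (π a) (π c) := by
  by_contra! h
  have hle := closure_image_le_centralizer (π := π) (S := {a}) (T := S ∪ T) (by
    rintro _ rfl t (ht | ht)
    exacts [h t ht, hcomm _ ha t ht])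
  have ha1 := eq_one_of_mem_centralizer hα (hπ a) (hle (apply_mem_closure_image rfl))
  exact hind a (Or.inl ha) (ha1 ▸ one_mem _)

theorem twelve_le_card (hα : 3 ≤ Nat.card α) (hπ : ∀ i, π i * π i = 1)
    (hind : IsIndependentOn π (S ∪ T)) (hcomm : ∀ s ∈ S, ∀ t ∈ T, Commute (π s) (π t))
    (hS : S.Nonempty) (hT : T.Nonempty) : 12 ≤ Nat.card α := by
  have : Finite α := (Nat.card_pos_iff.1 (by lia)).2
  obtain ⟨a, ha⟩ := hS
  obtain ⟨c, hc, hac⟩ := exists_not_commute hα hπ hind hcomm ha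
  have hpair : {a, c} ⊂ S := by
    refine (Set.pair_subset ha hc).ssubset_of_ne ?_
    rintro rfl
    have hle := closure_image_le_centralizer hcomm
    have hP := (closure_image_union (π := π) (S := {a, c}) (T := T)).le
    rw [Set.image_pair] at hle hP
    exact hac (commute_of_closure_pair_le_centralizer hP (hπ a) (hπ c)
      (hind.closure_ne_bot Set.subset_union_right hT) hle)
  have h6 := six_le_card_of_not_commute (apply_mem_closure_image (π := π) (Set.mem_insert a {c}))
    (apply_mem_closure_image (Set.mem_insert_of_mem a rfl)) (hπ a) hac
  have hlt := two_mul_card_le_of_lt ((hind.mono Set.subset_union_left).closure_lt_closure hpair)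
  rw [card_closure_eq_of_commute hind hcomm ⟨a, ha⟩ hT] at hlt
  lia

theorem two_pow_ncard_le_card [Finite α] [Finite ι] (hind : IsIndependentOn π (S ∪ T))
    (hcomm : ∀ s ∈ S, ∀ t ∈ T, Commute (π s) (π t)) (hS : S.Nonempty) (hT : T.Nonempty) :
    2 ^ S.ncard ≤ Nat.card α :=
  card_closure_eq_of_commute hind hcomm hS hT ▸ (hind.mono Set.subset_union_left).two_pow_ncard_le

-- Both `S₁` and `S₁ ∪ S₂` are commuting factors, so they generate groups of the same order.
theorem not_commute_of_union [Finite α] {S₁ S₂ T : Set ι}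
    [IsPreprimitive ↥(Subgroup.closure (π '' (S₁ ∪ S₂ ∪ T))) α]
    (hind : IsIndependentOn π (S₁ ∪ S₂ ∪ T)) (hcomm : ∀ s ∈ S₁ ∪ S₂, ∀ t ∈ T, Commute (π s) (π t))
    (hdisj : Disjoint S₁ S₂) (hS₁ : S₁.Nonempty) (hS₂ : S₂.Nonempty) (hT : T.Nonempty) :
    ¬ ∀ s ∈ S₁, ∀ t ∈ S₂, Commute (π s) (π t) := by
  intro h
  have hcard := card_closure_eq_of_commute hind hcomm (hS₁.mono Set.subset_union_left) hT
  have hss : S₁ ⊂ S₁ ∪ S₂ := by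
    obtain ⟨t, ht⟩ := hS₂
    exact ⟨Set.subset_union_left, fun hle =>
      Set.disjoint_left.1 hdisj (hle (Or.inr ht)) ht⟩
  have hlt := two_mul_card_le_of_lt ((hind.mono Set.subset_union_left).closure_lt_closure hss)
  rw [Set.union_assoc] at hind
  have : IsPreprimitive ↥(Subgroup.closure (π '' (S₁ ∪ (S₂ ∪ T)))) α := by
    rwa [← Set.union_assoc]
  have hcard₁ := card_closure_eq_of_commute hind
    (fun s hs t ht => ht.elim (h s hs t) (hcomm s (Or.inl hs) t)) hS₁
    (hS₂.mono Set.subset_union_left)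
  have hpos : 0 < Nat.card (Subgroup.closure (π '' S₁)) := Nat.card_pos
  lia

end Parts

end CommutingParts

theorem map_fst_closure_image {G H ι : Type*} [Group G] [Group H] (ρ : ι → G) (π : ι → H)
    {L : Set ι} : (Subgroup.closure ((fun i => (ρ i, π i)) '' L)).map (MonoidHom.fst G H) =
      Subgroup.closure (ρ '' L) := by
  rw [MonoidHom.map_closure, Set.image_image]
  rfl

theorem map_snd_closure_image {G H ι : Type*} [Group G] [Group H] (ρ : ι → G) (π : ι → H)
    {L : Set ι} : (Subgroup.closure ((fun i => (ρ i, π i)) '' L)).map (MonoidHom.snd G H) =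
      Subgroup.closure (π '' L) := by
  rw [MonoidHom.map_closure, Set.image_image]
  rfl

section Semiconj

open Function (Semiconj)

variable {β α ι : Type*} {b : β → α} {ρ : ι → Perm β} {π : ι → Perm α} {L : Set ι}

/-- The pairs of permutations of the source and the target of `b` that are intertwined by `b`. -/
def semiconjSubgroup (b : β → α) : Subgroup (Perm β × Perm α) where
  carrier := {q | Semiconj b q.1 q.2}
  one_mem' _ := rfl
  mul_mem' h h' := h.comp_right h'
  inv_mem' {q} h := h.inverses_right q.1.apply_symm_apply q.2.symm_apply_apply

theorem semiconj_mul {g h : Perm β} {p q : Perm α} (hgp : Semiconj b g p) (hhq : Semiconj b h q) :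
    Semiconj b ⇑(g * h) ⇑(p * q) := (semiconjSubgroup b).mul_mem (x := (g, p)) (y := (h, q)) hgp hhq

theorem closure_image_le_semiconjSubgroup (hπ : ∀ i, Semiconj b (ρ i) (π i)) :
    Subgroup.closure ((fun i => (ρ i, π i)) '' L) ≤ semiconjSubgroup b := by
  rw [Subgroup.closure_le]
  rintro _ ⟨i, -, rfl⟩
  exact hπ i

theorem exists_semiconj_of_mem_closure_base (hπ : ∀ i, Semiconj b (ρ i) (π i)) {p : Perm α}
    (hp : p ∈ Subgroup.closure (π '' L)) : ∃ g ∈ Subgroup.closure (ρ '' L), Semiconj b g p := by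
  rw [← map_snd_closure_image ρ] at hp
  obtain ⟨q, hq, rfl⟩ := hp
  exact ⟨q.1, map_fst_closure_image ρ π ▸ ⟨q, hq, rfl⟩, closure_image_le_semiconjSubgroup hπ hq⟩

theorem exists_semiconj_of_mem_closure_total (hπ : ∀ i, Semiconj b (ρ i) (π i)) {g : Perm β}
    (hg : g ∈ Subgroup.closure (ρ '' L)) : ∃ p ∈ Subgroup.closure (π '' L), Semiconj b g p := by
  rw [← map_fst_closure_image ρ π] at hg
  obtain ⟨q, hq, rfl⟩ := hg
  exact ⟨q.2, map_snd_closure_image ρ π ▸ ⟨q, hq, rfl⟩, closure_image_le_semiconjSubgroup hπ hq⟩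

theorem eq_of_semiconj (hb : Function.Surjective b) {g : Perm β} {p q : Perm α}
    (hp : Semiconj b g p) (hq : Semiconj b g q) : p = q := by
  refine Perm.ext fun c => ?_
  obtain ⟨x, rfl⟩ := hb c
  exact (hp x).symm.trans (hq x)

theorem commute_of_semiconj (hb : Function.Surjective b) {g h : Perm β} {p q : Perm α}
    (hgp : Semiconj b g p) (hhq : Semiconj b h q) (hgh : Commute g h) : Commute p q :=
  eq_of_semiconj hb (semiconj_mul hgp hhq) (hgh.eq ▸ semiconj_mul hhq hgp)

theorem mul_self_eq_one_of_semiconj (hb : Function.Surjective b) {g : Perm β} {p : Perm α}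
    (hgp : Semiconj b g p) (hg : g * g = 1) : p * p = 1 :=
  eq_of_semiconj hb (hg ▸ semiconj_mul hgp hgp) fun _ => rfl

theorem isBlock_preimage_of_semiconj {G : Subgroup (Perm β)} {P : Subgroup (Perm α)}
    (hGP : ∀ g ∈ G, ∃ p ∈ P, Semiconj b g p) {B : Set α} (hB : IsBlock P B) :
    IsBlock G (b ⁻¹' B) := by
  refine isBlock_iff_smul_eq_or_disjoint.2 fun ⟨g, hg⟩ => ?_
  obtain ⟨p, hp, hgp⟩ := hGP g hg
  have hpre : (⟨g, hg⟩ : G) • (b ⁻¹' B) = b ⁻¹' ((⟨p, hp⟩ : P) • B) := by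
    ext x
    obtain ⟨y, rfl⟩ := g.surjective x
    have hg' := Set.smul_mem_smul_set_iff (a := (⟨g, hg⟩ : G)) (s := b ⁻¹' B) (x := y)
    have hp' := Set.smul_mem_smul_set_iff (a := (⟨p, hp⟩ : P)) (s := B) (x := b y)
    rw [Set.mem_preimage, hgp]
    exact hg'.trans hp'.symm
  rw [hpre]
  exact (hB.smul_eq_or_disjoint ⟨p, hp⟩).imp (congrArg _) (Disjoint.preimage b)

theorem isPreprimitive_of_semiconj (hb : Function.Surjective b) {G : Subgroup (Perm β)}
    [IsPretransitive G β] {P : Subgroup (Perm α)} (hGP : ∀ g ∈ G, ∃ p ∈ P, Semiconj b g p)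
    (hmax : ∀ (c : α) (X : Set β), IsBlock G X → {x | b x = c} ⊆ X →
      X = {x | b x = c} ∨ X = Set.univ) : IsPreprimitive P α where
  exists_smul_eq c d := by
    obtain ⟨⟨x, rfl⟩, y, rfl⟩ := And.intro (hb c) (hb d)
    obtain ⟨⟨g, hg⟩, rfl⟩ := exists_smul_eq G x y
    obtain ⟨p, hp, hgp⟩ := hGP g hg
    exact ⟨⟨p, hp⟩, (hgp x).symm⟩
  isTrivialBlock_of_isBlock {B} hB := by
    rcases B.eq_empty_or_nonempty with rfl | ⟨c, hc⟩
    · exact Or.inl Set.subsingleton_empty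
    have hfiber : {x | b x = c} ⊆ b ⁻¹' B := fun x (hx : b x = c) => Set.mem_preimage.2 (hx ▸ hc)
    rcases hmax c (b ⁻¹' B) (isBlock_preimage_of_semiconj hGP hB) hfiber with h | h
    · refine Or.inl (Set.subsingleton_of_subset_singleton (a := c) fun d hd => ?_)
      obtain ⟨x, rfl⟩ := hb d
      exact h.subset hd
    · exact Or.inr (Set.eq_univ_of_forall fun d => by
        obtain ⟨x, rfl⟩ := hb d
        exact h.superset (Set.mem_univ x))

theorem isPreprimitive_closure_range (hb : Function.Surjective b)
    (hπ : ∀ i, Semiconj b (ρ i) (π i)) [IsPretransitive ↥(Subgroup.closure (Set.range ρ)) β]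
    (hmax : ∀ (c : α) (X : Set β), IsBlock ↥(Subgroup.closure (Set.range ρ)) X →
      {x | b x = c} ⊆ X → X = {x | b x = c} ∨ X = Set.univ) :
    IsPreprimitive ↥(Subgroup.closure (Set.range π)) α := by
  refine isPreprimitive_of_semiconj hb (fun g hg => ?_) hmax
  rw [← Set.image_univ] at hg ⊢
  exact exists_semiconj_of_mem_closure_total hπ hg

end Semiconj

/-- The fibers of the surjection `b` have two elements each, and `z` is the permutation swapping
the two elements of every fiber. -/
structure IsTwoFibration {β α : Type*} (b : β → α) (z : Perm β) : Prop where
  surjective : Function.Surjective b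
  apply_apply : ∀ x, z (z x) = x
  map_apply : ∀ x, b (z x) = b x
  apply_ne : ∀ x, z x ≠ x
  eq_or_eq : ∀ x y, b y = b x → y = x ∨ y = z x

theorem exists_isTwoFibration {β α : Type*} {b : β → α} (hb : Function.Surjective b)
    (hfib : ∀ c, Set.ncard {x | b x = c} = 2) : ∃ z, IsTwoFibration b z := by
  have hother : ∀ x, ∃ y, y ≠ x ∧ b y = b x ∧ ∀ u, b u = b x → u = x ∨ u = y := by
    intro x
    obtain ⟨u, v, huv, h⟩ := Set.ncard_eq_two.1 (hfib (b x))
    have hmem : ∀ y, b y = b x ↔ y = u ∨ y = v := Set.ext_iff.1 h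
    rcases (hmem x).1 rfl with rfl | rfl
    · exact ⟨v, huv.symm, (hmem v).2 (Or.inr rfl), fun y => (hmem y).1⟩
    · exact ⟨u, huv, (hmem u).2 (Or.inl rfl), fun y hy => ((hmem y).1 hy).symm⟩
  choose f hne hbf hf using hother
  have hff : Function.Involutive f := fun x =>
    (hf x (f (f x)) ((hbf _).trans (hbf _))).resolve_right (hne _)
  exact ⟨hff.toPerm f, hb, hff, hbf, hne, hf⟩

namespace IsTwoFibration

open Function (Semiconj)

variable {β α : Type*} {b : β → α} {z g : Perm β} {p : Perm α}

/-- The permutation swapping the two elements of each fiber over the support of `w`. -/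
def fiberPerm (hz : IsTwoFibration b z) (w : α → ZMod 2) : Perm β :=
  Function.Involutive.toPerm (fun x => if w (b x) = 0 then x else z x) fun x => by
    by_cases h : w (b x) = 0 <;> simp [h, hz.map_apply, hz.apply_apply]

theorem fiberPerm_apply (hz : IsTwoFibration b z) (w : α → ZMod 2) (x : β) :
    hz.fiberPerm w x = if w (b x) = 0 then x else z x := rfl

theorem fiberPerm_zero (hz : IsTwoFibration b z) : hz.fiberPerm 0 = 1 :=
  Perm.ext fun x => by simp [fiberPerm_apply]

theorem fiberPerm_one (hz : IsTwoFibration b z) : hz.fiberPerm 1 = z :=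
  Perm.ext fun x => by simp [fiberPerm_apply]

theorem fiberPerm_add (hz : IsTwoFibration b z) (v w : α → ZMod 2) :
    hz.fiberPerm (v + w) = hz.fiberPerm v * hz.fiberPerm w := by
  have htwo : ∀ a : ZMod 2, a = 0 ∨ a = 1 := by decide
  refine Perm.ext fun x => ?_
  rcases htwo (v (b x)) with h | h <;> rcases htwo (w (b x)) with h' | h' <;>
    simp [fiberPerm_apply, h, h', hz.map_apply, hz.apply_apply, CharTwo.add_self_eq_zero]

theorem apply_comm (hz : IsTwoFibration b z) (hg : Semiconj b g p) (x : β) : g (z x) = z (g x) :=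
  (hz.eq_or_eq (g x) (g (z x)) (by rw [hg, hg, hz.map_apply])).resolve_left
    fun h => hz.apply_ne x (g.injective h)

theorem exists_fiberPerm_eq (hz : IsTwoFibration b z) (hg : Semiconj b g (1 : Perm α)) :
    ∃ w, hz.fiberPerm w = g := by
  classical
  let s := Function.surjInv hz.surjective
  refine ⟨fun c => if g (s c) = s c then 0 else 1, Perm.ext fun x => ?_⟩
  have hy : b (s (b x)) = b x := Function.surjInv_eq _ _
  rw [fiberPerm_apply]
  generalize s (b x) = y at hy
  have hgy := hz.eq_or_eq y (g y) (hg y)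
  rcases hz.eq_or_eq y x hy.symm with rfl | rfl
  · by_cases h : g x = x
    · simp [h]
    · simp [hgy.resolve_left h, hz.apply_ne]
  · by_cases h : g y = y
    · simp [h, hz.apply_comm hg]
    · simp [hz.apply_comm hg, hgy.resolve_left h, hz.apply_ne]

theorem conj_fiberPerm (hz : IsTwoFibration b z) (hg : Semiconj b g p) (w : α → ZMod 2) :
    g⁻¹ * hz.fiberPerm w * g = hz.fiberPerm (w ∘ p) := by
  refine Perm.ext fun x => ?_
  rw [Perm.mul_apply, Perm.mul_apply, Perm.inv_eq_iff_eq, fiberPerm_apply, fiberPerm_apply, hg,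
    Function.comp_apply, apply_ite g, hz.apply_comm hg]

/-- The binary code of the fiber-preserving elements of a permutation group: its words are the
sets of fibers which some element of the group swaps, fixing all points outside them. -/
def code (hz : IsTwoFibration b z) (X : Subgroup (Perm β)) : Submodule (ZMod 2) (α → ZMod 2) :=
  AddSubgroup.toZModSubmodule 2
    { carrier := {w | hz.fiberPerm w ∈ X}
      zero_mem' := (congrArg (· ∈ X) hz.fiberPerm_zero).mpr (one_mem X)
      add_mem' := fun hv hw => (congrArg (· ∈ X) (hz.fiberPerm_add _ _)).mpr (mul_mem hv hw)
      neg_mem' := fun {v} hv => by rwa [show -v = v from funext fun c => CharTwo.neg_eq (v c)] }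

theorem mem_code (hz : IsTwoFibration b z) {X : Subgroup (Perm β)} {w : α → ZMod 2} :
    w ∈ hz.code X ↔ hz.fiberPerm w ∈ X := Iff.rfl

theorem code_mono (hz : IsTwoFibration b z) {X Y : Subgroup (Perm β)} (h : X ≤ Y) :
    hz.code X ≤ hz.code Y := fun _ hw => h hw

theorem isInvariantCode_code (hz : IsTwoFibration b z) {X : Subgroup (Perm β)}
    {P : Subgroup (Perm α)} (hlift : ∀ p ∈ P, ∃ g ∈ X, Semiconj b g p) :
    IsInvariantCode P (hz.code X) := by
  intro p hp w hw
  obtain ⟨g, hg, hgp⟩ := hlift p hp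
  rw [mem_code, ← hz.conj_fiberPerm hgp]
  exact mul_mem (mul_mem (inv_mem hg) hw) hg

theorem eq_of_mem_centralizer_of_semiconj_one (hz : IsTwoFibration b z) {P : Subgroup (Perm α)}
    [IsPretransitive P α] {X : Subgroup (Perm β)} (hlift : ∀ p ∈ P, ∃ h ∈ X, Semiconj b h p)
    (hgX : g ∈ Subgroup.centralizer (X : Set (Perm β))) (hg : Semiconj b g (1 : Perm α))
    (hg1 : g ≠ 1) : g = z := by
  refine Perm.ext fun x => (hz.eq_or_eq x (g x) (hg x)).resolve_left fun hx => hg1 ?_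
  refine Perm.ext fun y => ?_
  obtain ⟨⟨p, hp⟩, hpx⟩ := exists_smul_eq P (b x) (b y)
  obtain ⟨h, hh, hhp⟩ := hlift p hp
  have hghx : g (h x) = h x :=
    (DFunLike.congr_fun (Subgroup.mem_centralizer_iff.1 hgX h hh) x).symm.trans (congrArg h hx)
  rcases hz.eq_or_eq (h x) y (hpx.symm.trans (hhp x).symm) with rfl | rfl
  · exact hghx
  · rw [hz.apply_comm hg, hghx, Perm.one_apply]

theorem eq_of_mem_centralizer (hz : IsTwoFibration b z) (hα : 3 ≤ Nat.card α)
    {P : Subgroup (Perm α)} [IsPreprimitive P α] {X : Subgroup (Perm β)}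
    (hlift : ∀ p ∈ P, ∃ h ∈ X, Semiconj b h p)
    (hgX : g ∈ Subgroup.centralizer (X : Set (Perm β))) (hgp : Semiconj b g p) (hg1 : g ≠ 1)
    (hg2 : g * g = 1) : g = z := by
  have hp1 : p = 1 := by
    refine eq_one_of_mem_centralizer (P := P) hα (mul_self_eq_one_of_semiconj hz.surjective hgp hg2)
      (Subgroup.mem_centralizer_iff.2 fun q hq => ?_)
    obtain ⟨h, hh, hhq⟩ := hlift q hq
    exact commute_of_semiconj hz.surjective hhq hgp (Subgroup.mem_centralizer_iff.1 hgX h hh)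
  exact hz.eq_of_mem_centralizer_of_semiconj_one hlift hgX (hp1 ▸ hgp) hg1

section Generators

variable {ι : Type*} {ρ : ι → Perm β} {π : ι → Perm α} {L : Set ι}

theorem not_code_insert_le (hz : IsTwoFibration b z) (hπ : ∀ i, Semiconj b (ρ i) (π i))
    (hind : IsIndependentOn ρ Set.univ) {i j : ι} (hLgen : π i ∈ Subgroup.closure (π '' L))
    (hij : i ≠ j) (hi : i ∉ L) : ¬ hz.code (Subgroup.closure (ρ '' insert i L)) ≤
      hz.code (Subgroup.closure (ρ '' insert j L)) := by
  intro hle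
  obtain ⟨g, hg, hgi⟩ := exists_semiconj_of_mem_closure_base hπ hLgen
  obtain ⟨w, hw⟩ := hz.exists_fiberPerm_eq (g := ρ i * g⁻¹) (by
    rw [← mul_inv_cancel (π i)]
    exact semiconj_mul (hπ i) ((semiconjSubgroup b).inv_mem (x := (g, π i)) hgi))
  have hwi : w ∈ hz.code (Subgroup.closure (ρ '' insert i L)) := by
    rw [hz.mem_code, hw]
    exact mul_mem (apply_mem_closure_image (Set.mem_insert i L))
      (inv_mem (closure_image_mono (Set.subset_insert i L) hg))
  have hwj := hle hwi
  rw [hz.mem_code, hw] at hwj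
  have hij' := mul_mem hwj (closure_image_mono (Set.subset_insert j L) hg)
  rw [inv_mul_cancel_right] at hij'
  exact hind.notMem_closure (Set.mem_univ i) (Set.subset_univ _) (by simp [hij, hi]) hij'

theorem ncard_compl_le_two (hz : IsTwoFibration b z) [Finite α] [Finite ι]
    (hπ : ∀ i, Semiconj b (ρ i) (π i)) (hind : IsIndependentOn ρ Set.univ)
    (hLgen : ∀ i, π i ∈ Subgroup.closure (π '' L))
    [IsPreprimitive ↥(Subgroup.closure (π '' L)) α] (hα : 3 < Nat.card α)
    {E : Subgroup (Perm α)} (hEP : E ≤ Subgroup.closure (π '' L)) (hE : ∀ g ∈ E, g * g = 1)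
    (hcard : 2 ^ Nat.card α ≤ 8 * Nat.card E ^ 2) {k : ι} (hkL : k ∉ L) (hkz : ρ k = z) :
    Lᶜ.ncard ≤ 2 := by
  by_contra! h3
  have h2 : 1 < (Lᶜ \ {k}).ncard := by
    rw [Set.ncard_sdiff_singleton_of_mem hkL]
    lia
  obtain ⟨p, q, ⟨hp, hpk⟩, ⟨hq, hqk⟩, hpq⟩ := (Set.one_lt_ncard_iff).1 h2
  have hone : 1 ∉ hz.code (Subgroup.closure (ρ '' {k}ᶜ)) := by
    rw [hz.mem_code, hz.fiberPerm_one, ← hkz]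
    exact hind.notMem_closure (Set.mem_univ k) (Set.subset_univ _) (by simp)
  have hle : ∀ i, i ≠ k → hz.code (Subgroup.closure (ρ '' insert i L)) ≤
      hz.code (Subgroup.closure (ρ '' {k}ᶜ)) := fun i hik =>
    hz.code_mono (closure_image_mono (Set.insert_subset hik (Set.subset_compl_singleton_iff.2 hkL)))
  have hinv : ∀ i, IsInvariantCode (Subgroup.closure (π '' L))
      (hz.code (Subgroup.closure (ρ '' insert i L))) := fun i =>
    hz.isInvariantCode_code fun s hs => by
      obtain ⟨g, hg, hgs⟩ := exists_semiconj_of_mem_closure_base hπ hs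
      exact ⟨g, closure_image_mono (Set.subset_insert i L) hg, hgs⟩
  rcases le_or_le_of_isInvariantCode hα hEP hE hcard hone (hle p hpk) (hle q hqk) (hinv p) (hinv q)
    with h | h
  · exact hz.not_code_insert_le hπ hind (hLgen p) hpq hp h
  · exact hz.not_code_insert_le hπ hind (hLgen q) hpq.symm hq h

end Generators

end IsTwoFibration

section Strings

section Adjacent

variable {r : ℕ} {S : Set (Fin r)}

/-- The indices outside `S` next to an element of `S`. -/
def adjacentIndices (S : Set (Fin r)) : Set (Fin r) :=
  {i | i ∉ S ∧ ∃ l ∈ S, (i : ℕ) = l + 1 ∨ (l : ℕ) = i + 1}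

theorem subsingleton_upper_adjacent (hS : S.OrdConnected) :
    {i : Fin r | i ∉ S ∧ ∃ l ∈ S, (i : ℕ) = l + 1}.Subsingleton := by
  have hle : ∀ i ∉ S, ∀ j, (∃ l ∈ S, (i : ℕ) = l + 1) → (∃ l ∈ S, (j : ℕ) = l + 1) → j ≤ i := by
    rintro i hi j ⟨l, hl, hil⟩ ⟨k, hk, hjk⟩
    by_contra! hij
    exact hi (hS.out hl hk ⟨by lia, by lia⟩)
  exact fun i hi j hj => le_antisymm (hle j hj.1 i hj.2 hi.2) (hle i hi.1 j hi.2 hj.2)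

theorem subsingleton_lower_adjacent (hS : S.OrdConnected) :
    {i : Fin r | i ∉ S ∧ ∃ l ∈ S, (l : ℕ) = i + 1}.Subsingleton := by
  have hle : ∀ i ∉ S, ∀ j, (∃ l ∈ S, (l : ℕ) = i + 1) → (∃ l ∈ S, (l : ℕ) = j + 1) → i ≤ j := by
    rintro i hi j ⟨l, hl, hil⟩ ⟨k, hk, hjk⟩
    by_contra! hij
    exact hi (hS.out hk hl ⟨by lia, by lia⟩)
  exact fun i hi j hj => le_antisymm (hle i hi.1 j hi.2 hj.2) (hle j hj.1 i hj.2 hi.2)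

theorem ncard_adjacentIndices_le_two (hS : S.OrdConnected) : (adjacentIndices S).ncard ≤ 2 := by
  have hsub : adjacentIndices S ⊆ {i | i ∉ S ∧ ∃ l ∈ S, (i : ℕ) = l + 1} ∪
      {i | i ∉ S ∧ ∃ l ∈ S, (l : ℕ) = i + 1} := by
    rintro i ⟨hi, l, hl, h | h⟩
    exacts [Or.inl ⟨hi, l, hl, h⟩, Or.inr ⟨hi, l, hl, h⟩]
  have hup := Set.ncard_le_one_iff_subsingleton.2 (subsingleton_upper_adjacent hS)
  have hlow := Set.ncard_le_one_iff_subsingleton.2 (subsingleton_lower_adjacent hS)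
  have hle := (Set.ncard_le_ncard hsub).trans (Set.ncard_union_le _ _)
  lia

theorem adjacentIndices_union_subset {T : Set (Fin r)} :
    adjacentIndices (S ∪ T) ⊆ adjacentIndices S ∪ adjacentIndices T := by
  rintro i ⟨hi, l, hl, h⟩
  exact hl.imp (fun hl => ⟨mt Or.inl hi, l, hl, h⟩) fun hl => ⟨mt Or.inr hi, l, hl, h⟩

theorem exists_gap_of_not_ordConnected (hS : ¬ S.OrdConnected) :
    ∃ g ∉ S, (S ∩ Set.Iio g).Nonempty ∧ (S ∩ Set.Ioi g).Nonempty := by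
  simp only [Set.ordConnected_def, not_forall, Set.not_subset] at hS
  obtain ⟨a, ha, c, hc, g, ⟨hag, hgc⟩, hg⟩ := hS
  exact ⟨g, hg, ⟨a, ha, hag.lt_of_ne fun h => hg (h ▸ ha)⟩,
    ⟨c, hc, hgc.lt_of_ne fun h => hg (h ▸ hc)⟩⟩

theorem inter_Iio_union_inter_Ioi {g : Fin r} (hg : g ∉ S) :
    S ∩ Set.Iio g ∪ S ∩ Set.Ioi g = S := by
  rw [← Set.inter_union_distrib_left, Set.Iio_union_Ioi, Set.inter_eq_left]
  exact Set.subset_compl_singleton_iff.2 hg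

end Adjacent

/-- Nonconsecutive members of the family `π` commute, as for the generators of a string group. -/
def IsStringFamily {G : Type*} [Mul G] {r : ℕ} (π : Fin r → G) : Prop :=
  ∀ i j : Fin r, (i : ℕ) + 1 < j → Commute (π i) (π j)

section LargeElementaryAbelian

variable {G : Type*} [Group G] {r : ℕ} {π : Fin r → G}

theorem mul_self_eq_one_of_mem_closure {X : Set G} (h2 : ∀ x ∈ X, x * x = 1)
    (hcomm : ∀ x ∈ X, ∀ y ∈ X, Commute x y) {g : G} (hg : g ∈ Subgroup.closure X) : g * g = 1 := by
  have := Subgroup.isMulCommutative_closure fun x hx y hy => (hcomm x hx y hy).eq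
  induction hg using Subgroup.closure_induction with
  | mem x hx => exact h2 x hx
  | one => exact one_mul 1
  | mul x y hx hy hxx hyy =>
    have hxy : Commute x y := congrArg Subtype.val
      (mul_comm' (⟨x, hx⟩ : Subgroup.closure X) ⟨y, hy⟩)
    rw [hxy.symm.mul_mul_mul_comm, hxx, hyy, one_mul]
  | inv x _ hx => rw [← mul_inv_rev, hx, inv_one]

theorem IsStringFamily.mul_self_eq_one_of_mem_closure_parity (hcomm : IsStringFamily π)
    (hπ : ∀ i, π i * π i = 1) (k : ℕ) {L : Set (Fin r)} {g : G}
    (hg : g ∈ Subgroup.closure (π '' {l ∈ L | (l : ℕ) % 2 = k})) : g * g = 1 := by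
  refine mul_self_eq_one_of_mem_closure ?_ ?_ hg
  · rintro _ ⟨i, -, rfl⟩
    exact hπ i
  · rintro _ ⟨i, ⟨-, hi⟩, rfl⟩ _ ⟨j, ⟨-, hj⟩, rfl⟩
    rcases lt_trichotomy i j with h | rfl | h
    · exact hcomm i j (by lia)
    · exact Commute.refl _
    · exact (hcomm j i (by lia)).symm

theorem IsStringFamily.exists_large_elementary_abelian [Finite G] (hcomm : IsStringFamily π)
    (hπ : ∀ i, π i * π i = 1) {L : Set (Fin r)} (hind : IsIndependentOn π L) :
    ∃ E ≤ Subgroup.closure (π '' L), (∀ g ∈ E, g * g = 1) ∧ 2 ^ L.ncard ≤ Nat.card E ^ 2 := by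
  let P (k : ℕ) : Set (Fin r) := {l ∈ L | (l : ℕ) % 2 = k}
  have hsub : ∀ k, P k ⊆ L := fun k => Set.sep_subset L _
  have hparity : L ⊆ P 0 ∪ P 1 := fun l hl =>
    (Nat.mod_two_eq_zero_or_one l).imp (fun h => ⟨hl, h⟩) fun h => ⟨hl, h⟩
  have hL := (Set.ncard_le_ncard hparity).trans (Set.ncard_union_le _ _)
  obtain ⟨k, hk⟩ : ∃ k, L.ncard ≤ 2 * (P k).ncard := by
    by_contra! h
    have h0 := h 0
    have h1 := h 1
    lia
  refine ⟨_, closure_image_mono (hsub k), fun g => hcomm.mul_self_eq_one_of_mem_closure_parity hπ k,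
    ?_⟩
  calc 2 ^ L.ncard ≤ 2 ^ (2 * (P k).ncard) := Nat.pow_le_pow_right two_pos hk
    _ = (2 ^ (P k).ncard) ^ 2 := by rw [mul_comm, pow_mul]
    _ ≤ _ := Nat.pow_le_pow_left (hind.mono (hsub k)).two_pow_ncard_le 2

end LargeElementaryAbelian

section Gaps

theorem IsStringFamily.commute_of_gap {G : Type*} [Mul G] {r : ℕ} {π : Fin r → G}
    (hcomm : IsStringFamily π) {S : Set (Fin r)} {g : Fin r} :
    ∀ s ∈ S ∩ Set.Iio g, ∀ t ∈ S ∩ Set.Ioi g, Commute (π s) (π t) := by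
  rintro s ⟨-, hs : s < g⟩ t ⟨-, ht : g < t⟩
  exact hcomm s t (by lia)

variable {α : Type*} [Finite α] {r : ℕ} {π : Fin r → Perm α}

theorem IsStringFamily.ordConnected_part (hcomm : IsStringFamily π) {S T : Set (Fin r)}
    [IsPreprimitive ↥(Subgroup.closure (π '' (S ∪ T))) α] (hind : IsIndependentOn π (S ∪ T))
    (hST : ∀ s ∈ S, ∀ t ∈ T, Commute (π s) (π t)) (hT : T.Nonempty) : S.OrdConnected := by
  by_contra hS
  obtain ⟨g, hg, hlt, hgt⟩ := exists_gap_of_not_ordConnected hS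
  have hparts := inter_Iio_union_inter_Ioi hg
  have : IsPreprimitive ↥(Subgroup.closure
      (π '' (S ∩ Set.Iio g ∪ S ∩ Set.Ioi g ∪ T))) α := by rwa [hparts]
  refine not_commute_of_union (hparts.symm ▸ hind) (hparts.symm ▸ hST) ?_ hlt hgt hT
    hcomm.commute_of_gap
  exact Set.disjoint_left.2 fun l hl hl' =>
    lt_asymm (Set.mem_Iio.1 hl.2) (Set.mem_Ioi.1 hl'.2)

theorem IsStringFamily.ncard_add_ncard_adjacentIndices_lt (hcomm : IsStringFamily π)
    (hα : 3 ≤ Nat.card α) (hπ : ∀ i, π i * π i = 1) {L : Set (Fin r)}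
    [IsPreprimitive ↥(Subgroup.closure (π '' L)) α] (hind : IsIndependentOn π L)
    (hL : ¬ L.OrdConnected) : L.ncard + (adjacentIndices L).ncard + 1 < Nat.card α := by
  obtain ⟨g, hg, hlt, hgt⟩ := exists_gap_of_not_ordConnected hL
  have hparts := inter_Iio_union_inter_Ioi hg
  have hST := hcomm.commute_of_gap (S := L) (g := g)
  generalize L ∩ Set.Iio g = S, L ∩ Set.Ioi g = T at *
  subst hparts
  have hTS : ∀ t ∈ T, ∀ s ∈ S, Commute (π t) (π s) := fun t ht s hs => (hST s hs t ht).symm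
  have : IsPreprimitive ↥(Subgroup.closure (π '' (T ∪ S))) α := by rwa [Set.union_comm]
  have hind' : IsIndependentOn π (T ∪ S) := Set.union_comm S T ▸ hind
  have hcard := add_add_five_lt_of_two_pow_le (twelve_le_card hα hπ hind hST hlt hgt)
    (two_pow_ncard_le_card hind hST hlt hgt) (two_pow_ncard_le_card hind' hTS hgt hlt)
  have hS := ncard_adjacentIndices_le_two (hcomm.ordConnected_part hind hST hgt)
  have hT := ncard_adjacentIndices_le_two (hcomm.ordConnected_part hind' hTS hlt)
  have hadj := (Set.ncard_le_ncard adjacentIndices_union_subset).trans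
    (Set.ncard_union_le (adjacentIndices S) (adjacentIndices T))
  have hle := Set.ncard_union_le S T
  lia

end Gaps

end Strings

section StringCGroups

variable {n r : ℕ} {ρ : Fin r → Perm (Fin n)}

theorem IsSggi.mul_self_eq_one (hρ : IsSggi ρ) (i : Fin r) : ρ i * ρ i = 1 := by
  rw [← pow_two, ← hρ.1 i, pow_orderOf_eq_one]

theorem IsSggi.isStringFamily (hρ : IsSggi ρ) : IsStringFamily ρ := by
  intro i j hij
  have h : ρ i * ρ j * (ρ i * ρ j) = 1 := by
    rw [← pow_two]
    exact hρ.2 i j (by rw [abs_sub_comm, lt_abs]; lia)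
  have hinv : ∀ k, (ρ k)⁻¹ = ρ k := fun k => inv_eq_of_mul_eq_one_left (hρ.mul_self_eq_one k)
  calc ρ i * ρ j = (ρ i * ρ j)⁻¹ := eq_inv_of_mul_eq_one_left h
    _ = ρ j * ρ i := by rw [mul_inv_rev, hinv, hinv]

theorem IsStringC.isIndependentOn (hρ : IsStringC ρ) : IsIndependentOn ρ Set.univ := by
  intro i _ hi
  have hinf := (hρ.2 {i} (Set.univ \ {i})).le
    ⟨apply_mem_closure_image (Set.mem_singleton i), hi⟩
  rw [Set.inter_sdiff_self, Set.image_empty, Subgroup.closure_empty, Subgroup.mem_bot] at hinf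
  simpa [hinf] using hρ.1.1 i

end StringCGroups

section GeneratorsOutside

theorem IsTwoFibration.apply_eq_of_commute {β α : Type*} {b : β → α} {z : Perm β} {ι : Type*}
    {ρ : ι → Perm β} {π : ι → Perm α} {L : Set ι} [IsPreprimitive ↥(Subgroup.closure (π '' L)) α]
    (hz : IsTwoFibration b z) (hα : 3 ≤ Nat.card α) (hπ : ∀ i, Function.Semiconj b (ρ i) (π i))
    {i : ι} (hi1 : ρ i ≠ 1) (hi2 : ρ i * ρ i = 1) (hi : ∀ l ∈ L, Commute (ρ i) (ρ l)) :
    ρ i = z := by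
  refine hz.eq_of_mem_centralizer (P := Subgroup.closure (π '' L)) hα
    (fun _ => exists_semiconj_of_mem_closure_base hπ) ?_ (hπ i) hi1 hi2
  refine closure_image_le_centralizer (S := {i}) ?_ (apply_mem_closure_image (Set.mem_singleton i))
  rintro _ rfl
  exact hi

variable {r : ℕ} {L : Set (Fin r)}

theorem IsStringFamily.compl_subset {G : Type*} [Mul G] {ρ : Fin r → G}
    (hcomm : IsStringFamily ρ) :
    Lᶜ ⊆ {i | i ∉ L ∧ ∀ l ∈ L, Commute (ρ i) (ρ l)} ∪ adjacentIndices L := by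
  intro i hi
  by_contra! h
  rw [Set.mem_union, not_or] at h
  refine h.1 ⟨hi, fun l hl => ?_⟩
  have hne : (i : ℕ) ≠ l := fun e => hi (Fin.ext e ▸ hl)
  have hadj : ¬ ((i : ℕ) = l + 1 ∨ (l : ℕ) = i + 1) := fun hil => h.2 ⟨hi, l, hl, hil⟩
  rcases Nat.lt_or_gt_of_ne hne with hlt | hlt
  · exact hcomm i l (by lia)
  · exact (hcomm l i (by lia)).symm

theorem IsStringFamily.ncard_compl_le {G : Type*} [Mul G] {ρ : Fin r → G}
    (hcomm : IsStringFamily ρ) :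
    Lᶜ.ncard ≤
      {i | i ∉ L ∧ ∀ l ∈ L, Commute (ρ i) (ρ l)}.ncard + (adjacentIndices L).ncard :=
  (Set.ncard_le_ncard hcomm.compl_subset).trans (Set.ncard_union_le _ _)

theorem IsStringFamily.of_semiconj {β α : Type*} {b : β → α} {ρ : Fin r → Perm β}
    {π : Fin r → Perm α} (hρ : IsStringFamily ρ) (hb : Function.Surjective b)
    (hπ : ∀ i, Function.Semiconj b (ρ i) (π i)) : IsStringFamily π := fun i j hij =>
  commute_of_semiconj hb (hπ i) (hπ j) (hρ i j hij)

variable {β α : Type*} {b : β → α} {z : Perm β} {ρ : Fin r → Perm β} {π : Fin r → Perm α}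
  [IsPreprimitive ↥(Subgroup.closure (π '' L)) α]

theorem IsTwoFibration.ncard_commuting_le_one (hz : IsTwoFibration b z) (hα : 3 ≤ Nat.card α)
    (hπ : ∀ i, Function.Semiconj b (ρ i) (π i)) (hρ2 : ∀ i, ρ i * ρ i = 1)
    (hind : IsIndependentOn ρ Set.univ) :
    {i | i ∉ L ∧ ∀ l ∈ L, Commute (ρ i) (ρ l)}.ncard ≤ 1 := by
  refine Set.ncard_le_one_iff_subsingleton.2 fun i hi j hj =>
    hind.injOn (Set.mem_univ i) (Set.mem_univ j) ?_
  rw [hz.apply_eq_of_commute hα hπ (hind.apply_ne_one (Set.mem_univ i)) (hρ2 i) hi.2,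
    hz.apply_eq_of_commute hα hπ (hind.apply_ne_one (Set.mem_univ j)) (hρ2 j) hj.2]

theorem ncard_compl_le_two_of_ordConnected [Finite α] (hz : IsTwoFibration b z)
    (hα : 3 < Nat.card α) (hr : Nat.card α ≤ r) (hπ : ∀ i, Function.Semiconj b (ρ i) (π i))
    (hρ2 : ∀ i, ρ i * ρ i = 1) (hcomm : IsStringFamily ρ) (hind : IsIndependentOn ρ Set.univ)
    (hLgen : ∀ i, π i ∈ Subgroup.closure (π '' L)) (hLind : IsIndependentOn π L)
    (hL : L.OrdConnected) : Lᶜ.ncard ≤ 2 := by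
  have hC := hz.ncard_commuting_le_one (L := L) hα.le hπ hρ2 hind
  have hadj := ncard_adjacentIndices_le_two hL
  have hcompl := hcomm.ncard_compl_le (L := L)
  by_contra! h3
  obtain ⟨k, hkL, hk⟩ : {i | i ∉ L ∧ ∀ l ∈ L, Commute (ρ i) (ρ l)}.Nonempty := by
    rw [← Set.ncard_pos]
    lia
  obtain ⟨E, hEP, hE, hLE⟩ := (hcomm.of_semiconj hz.surjective hπ).exists_large_elementary_abelian
    (fun i => mul_self_eq_one_of_semiconj hz.surjective (hπ i) (hρ2 i)) hLind
  have hcard : 2 ^ Nat.card α ≤ 8 * Nat.card E ^ 2 := by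
    have hr' := Set.ncard_add_ncard_compl L
    rw [Nat.card_fin] at hr'
    calc 2 ^ Nat.card α ≤ 2 ^ (3 + L.ncard) := Nat.pow_le_pow_right two_pos (by lia)
      _ = 8 * 2 ^ L.ncard := by rw [pow_add]; norm_num
      _ ≤ _ := Nat.mul_le_mul_left 8 hLE
  refine h3.not_ge (hz.ncard_compl_le_two hπ hind hLgen hα hEP hE hcard hkL ?_)
  exact hz.apply_eq_of_commute hα.le hπ (hind.apply_ne_one (Set.mem_univ k)) (hρ2 k) hk

end GeneratorsOutside

theorem stmt13_general {r : ℕ} {β α : Type*} [Finite α] (hα : 3 < Nat.card α)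
    (hr : Nat.card α ≤ r) {ρ : Fin r → Perm β} (hρ2 : ∀ i, ρ i * ρ i = 1)
    (hcomm : IsStringFamily ρ) (hind : IsIndependentOn ρ Set.univ) {b : β → α}
    (hb : Function.Surjective b) (hfib : ∀ c, Set.ncard {x | b x = c} = 2) {π : Fin r → Perm α}
    (hπ : ∀ i, Function.Semiconj b (ρ i) (π i))
    [IsPreprimitive ↥(Subgroup.closure (Set.range π)) α] {L : Set (Fin r)}
    (hLgen : Subgroup.closure (π '' L) = Subgroup.closure (Set.range π))
    (hLind : IsIndependentOn π L) : Lᶜ.ncard ≤ 2 ∧ Nat.card α - 2 ≤ L.ncard := by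
  have : IsPreprimitive ↥(Subgroup.closure (π '' L)) α := by rwa [hLgen]
  obtain ⟨z, hz⟩ := exists_isTwoFibration hb hfib
  have hr' := Set.ncard_add_ncard_compl L
  rw [Nat.card_fin] at hr'
  suffices h : Lᶜ.ncard ≤ 2 from ⟨h, by lia⟩
  by_cases hL : L.OrdConnected
  · refine ncard_compl_le_two_of_ordConnected hz hα hr hπ hρ2 hcomm hind (fun i => ?_) hLind hL
    exact hLgen ▸ Subgroup.subset_closure (Set.mem_range_self i)
  · have hlt := (hcomm.of_semiconj hb hπ).ncard_add_ncard_adjacentIndices_lt hα.le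
      (fun i => mul_self_eq_one_of_semiconj hb (hπ i) (hρ2 i)) hLind hL
    have hC := hz.ncard_commuting_le_one (L := L) hα.le hπ hρ2 hind
    have hcompl := hcomm.ncard_compl_le (L := L)
    lia

theorem stmt13 {n r m : ℕ} (hm7 : 7 ≤ m) (hn : n = 2 * m) (hr : n / 2 ≤ r)
    (ρ : Fin r → Equiv.Perm (Fin n)) (hstring : IsStringC ρ)
    (htrans : MulAction.IsPretransitive ↥(Subgroup.closure (Set.range ρ)) (Fin n))
    (b : Fin n → Fin m) (hbsurj : Function.Surjective b)
    (hfib : ∀ c : Fin m, Set.ncard {x | b x = c} = 2)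
    (hcompat : ∀ g ∈ Subgroup.closure (Set.range ρ), ∀ x y : Fin n,
      b x = b y → b (g x) = b (g y))
    -- every fiber of b is a maximal block
    (hmax : ∀ (c : Fin m) (X : Set (Fin n)),
      MulAction.IsBlock ↥(Subgroup.closure (Set.range ρ)) X →
      {x | b x = c} ⊆ X → X = {x | b x = c} ∨ X = Set.univ)
    -- π l is the induced block permutation φ (ρ l)
    (π : Fin r → Equiv.Perm (Fin m))
    (hπ : ∀ (l : Fin r) (x : Fin n), b (ρ l x) = π l (b x))
    -- L generates the image of φ independently
    (L : Set (Fin r))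
    (hLgen : Subgroup.closure (π '' L) = Subgroup.closure (Set.range π))
    (hLind : ∀ l ∈ L, π l ∉ Subgroup.closure (π '' (L \ {l}))) :
    ({i : Fin r | i ∉ L ∧ ¬ ∀ l ∈ L, Commute (ρ i) (ρ l)} ∪
      {i : Fin r | i ∉ L ∧ ∀ l ∈ L, Commute (ρ i) (ρ l)}).ncard ≤ 2 ∧
    n / 2 - 2 ≤ L.ncard := by
  have := isPreprimitive_closure_range hbsurj hπ hmax
  obtain ⟨hcompl, hL⟩ := stmt13_general (by rw [Nat.card_fin]; lia) (by rw [Nat.card_fin]; lia)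
    hstring.1.mul_self_eq_one hstring.1.isStringFamily hstring.isIndependentOn hbsurj hfib hπ
    hLgen hLind
  rw [Nat.card_fin] at hL
  exact ⟨(Set.ncard_le_ncard (Set.union_subset (fun i hi => hi.1) fun i hi => hi.1)).trans hcompl,
    by lia⟩
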